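/- For the family C_m of lifted extended quadratic residue codes of length 24 modulo 3^m, let A_{3,3} := 3^{−36}·swe_{C_6}(x_0, x_1, x_2, z−y_2, z+2y_2−3y_1, z+2y_2+6y_1−9y_0, z+2y_2+6y_1+18y_0) ∈ ℚ[x_0,x_1,x_2,y_0,y_1,y_2,z]. Then the sum of those monomials of A_{3,3} that are divisible by x_0·y_0 is zero, i.e. D_{3,3} = 0. -/

import Mathlib

/-!
Write `Φ(c)` for the product of the substituted variables over the coordinates of a codeword `c`,
so that `A_{3,3}` is a constant times the sum of all `Φ(c)`. The variable `x_0` occurs in `Φ(c)`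
only when `c` is nonzero modulo `3`, so it suffices that `y_0` drops out of the sum of `Φ(c)` over
those words. The variable `y_0` enters only through the entries divisible by `243`, with
coefficient `18` at `0` and `-9` at `243` and `486`, and `18 - 9 - 9 = 0`. Hence it is enough to
find, for each coordinate `j`, a permutation of the words `c` that are nonzero modulo `3` with
`243 ∣ c j` which adds `243` to `c j` and preserves the valuations of all other coordinates
(`exists_shift`). Then `y_0` can be removed from one coordinate after the other (`sum_unitWords`).

Such a permutation has the form `c ↦ u c + 27 d` with a unit `u` and a codeword `d`, and the
existence of `u` and `d` is the lemma `shifting`. Let `S` be the set of coordinates of `c` divisible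
by `27`. By duality (`separate`), the first candidate `u = 1` fails only if there is a functional
supported on `S` that vanishes on the code modulo `27`. The code is self-dual up to a diagonal
rescaling of the coordinates, so this functional is, modulo `27`, a codeword supported on `S`. The
remaining facts, collected in `GoodCode`, say that `S` has at most `12` elements, and that for
`12` elements the words vanishing on `S` form a line modulo `3`, while `c` is not divisible by
`243` on all of `S`; together they make room for the change by `243`, at the cost of a unit `u`
in the extremal case.

These facts are finite statements about the code modulo `729`, but the code has `3 ^ 72` words. They
are settled by a search over the residues modulo `3` of the systematic coordinates
(`checkAll_true`); for residues of few enough nonzero coordinates, linear algebra over the rings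
`ℤ/3`, `ℤ/9` and `ℤ/81` decides about their lifts. The affine maps `x ↦ 2 ^ a x + b` of the `23`
cyclic coordinates and the sign change preserve the code, so that the search can be restricted to
normalised supports: a suitable cyclic shift makes the support satisfy a ballot condition.

Finally, a divisor of `x ^ 23 - 1` modulo `729` is determined by its reduction modulo `3`, as
`x ^ 23 - 1` is separable there. So the lifted code is one of two explicit codes, which differ by
reversing the cyclic coordinates (`goodCode_of_isLiftedQR`).
-/

open MvPolynomial
open scoped Classical

noncomputable section

/-- The symmetrized weight enumerator of a code `C ⊆ (ℤ/Nℤ)^n` (for `N = p^m`):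
the variable `X i` for `i < m` records the number of coordinates of `p`-adic valuation `i`,
and the last variable `X m` (the variable `z`) records the number of zero coordinates. -/
def swe (p m : ℕ) {N n : ℕ} [NeZero N]
    (C : Submodule (ZMod N) (Fin n → ZMod N)) : MvPolynomial (Fin (m + 1)) ℚ :=
  ∑ c : Fin n → ZMod N, if c ∈ C then
      (∏ i : Fin m, (X (Fin.castSucc i) : MvPolynomial (Fin (m + 1)) ℚ) ^
          (Finset.univ.filter fun j => c j ≠ 0 ∧ padicValNat p (c j).val = (i : ℕ)).card)
        * (X (Fin.last m) : MvPolynomial (Fin (m + 1)) ℚ) ^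
            (Finset.univ.filter fun j => c j = 0).card
    else 0

/-- `g` is a monic irreducible degree-11 factor of `x^23 - 1` over `ℤ/pℤ`. -/
def IsQRFactor (p : ℕ) (g : Polynomial (ZMod p)) : Prop :=
  g.Monic ∧ g.natDegree = 11 ∧ Irreducible g ∧ g ∣ (Polynomial.X ^ 23 - 1)

/-- `gm` is the (Hensel) lift of `g` to `ℤ/Nℤ` and `C` is the associated lifted extended
cyclic quadratic residue code of length 24: the extension by an overall parity check of the
cyclic code of length 23 generated by `gm`. -/
def IsLiftedQR {p N : ℕ} (hpN : p ∣ N) (g : Polynomial (ZMod p)) (gm : Polynomial (ZMod N))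
    (C : Submodule (ZMod N) (Fin 24 → ZMod N)) : Prop :=
  gm.Monic ∧ gm.natDegree = 11 ∧ gm ∣ (Polynomial.X ^ 23 - 1) ∧
    gm.map (ZMod.castHom hpN (ZMod p)) = g ∧
    ∀ c : Fin 24 → ZMod N, c ∈ C ↔
      ((∃ f : Polynomial (ZMod N), ∀ j : Fin 23,
          c (Fin.castSucc j) = ((f * gm) %ₘ (Polynomial.X ^ 23 - 1)).coeff (j : ℕ)) ∧
        c (Fin.last 23) = - ∑ j : Fin 23, c (Fin.castSucc j))

/-- The sum of those monomials of `A` that are divisible by `X i * X j`. -/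
def divPart {σ : Type*} (A : MvPolynomial σ ℚ) (i j : σ) : MvPolynomial σ ℚ :=
  ∑ d ∈ A.support.filter (fun d => d i ≠ 0 ∧ d j ≠ 0), monomial d (A.coeff d)

namespace LiftedQR

/-! ### The search procedure -/

/-- `force x K = K x`, written with the recursor of `ℕ` so that a call-by-name evaluation of
`force x K` normalises `x` to a numeral before it enters `K`. -/
def force (x : ℕ) (K : ℕ → Bool) : Bool :=
  Nat.rec (motive := fun _ => Bool) (K 0) (fun n _ => K (Nat.succ n)) x

/-- The `12 × 12` matrix `A` (entries in `[0, 729)`) for which `[I | A]` is a generator matrix of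
the extended code modulo `729`; the last column belongs to the coordinate `∞`. -/
def tabA : List (List ℕ) :=
  [[728, 635, 638, 4, 97, 189, 185, 90, 725, 633, 636, 542],
   [636, 5, 191, 281, 277, 178, 627, 536, 447, 545, 3, 647],
   [3, 189, 278, 179, 719, 439, 352, 357, 548, 6, 95, 479],
   [95, 185, 86, 627, 441, 260, 360, 550, 8, 191, 93, 19],
   [93, 89, 629, 443, 354, 360, 551, 9, 193, 188, 92, 643],
   [92, 722, 442, 261, 267, 462, 107, 290, 377, 277, 725, 351],
   [725, 445, 358, 458, 649, 294, 473, 467, 274, 722, 634, 332],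
   [634, 543, 548, 9, 196, 379, 373, 275, 87, 631, 635, 63],
   [635, 546, 8, 195, 379, 466, 273, 85, 628, 540, 637, 710],
   [637, 6, 193, 376, 371, 271, 719, 534, 446, 544, 3, 273],
   [3, 190, 279, 181, 85, 533, 445, 449, 546, 5, 94, 105],
   [94, 91, 725, 632, 540, 544, 639, 4, 96, 93, 728, 187]]

/-- The residue modulo `N` of the digit of `r` at the place value `pw`. -/
def dg (N pw r : ℕ) : ℕ := Nat.mod (Nat.div r pw) N

/-- For `N ∈ {3, 9, 81}` and `gcd p N ∣ g`: a multiplier `f ≤ N` with `g + f * p ≡ 0` modulo `N`.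
The exponent `53` inverts units modulo `81`. -/
def fac (N p g : ℕ) : ℕ :=
  Nat.sub N (Nat.mod (Nat.mul (Nat.div g (Nat.gcd p N)) (Nat.pow (Nat.div p (Nat.gcd p N)) 53)) N)

/-- One column of Gaussian elimination over `ℤ/N`: the packed rows still to be treated are cleared
at the place `pw` against the current pivot `p`, which is exchanged with a row whose entry has
smaller valuation. The result (final pivot, cleared rows) is passed to `K`. -/
def clearCol (N pw : ℕ) (K : ℕ → List ℕ → Bool) : List ℕ → ℕ → List ℕ → Bool
  | [], p, acc => K p acc
  | g :: gs, p, acc =>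
    force (dg N pw p) fun pd => force (dg N pw g) fun gd =>
      cond (Nat.beq (Nat.mod gd (Nat.gcd pd N)) 0)
        (force (Nat.add g (Nat.mul (fac N pd gd) p)) fun g' => clearCol N pw K gs p (g' :: acc))
        (force (Nat.add p (Nat.mul (fac N gd pd) g)) fun p' => clearCol N pw K gs g (p' :: acc))

/-- Look for a first pivot at the place `pw`, then clear the remaining rows. -/
def start (N pw : ℕ) (K : ℕ → List ℕ → Bool) : List ℕ → List ℕ → Bool
  | [], acc => K 0 acc
  | g :: gs, acc =>
    cond (Nat.beq (dg N pw g) 0) (start N pw K gs (g :: acc)) (clearCol N pw K gs g acc)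

/-- Intersect the coset `m + ⟨gs⟩` over `ℤ/N` with the vectors whose entry at the place `pw` is
zero, and pass the new coset to `K`; the answer is `true` if the intersection is empty. -/
def impose (N pw m : ℕ) (gs : List ℕ) (K : ℕ → List ℕ → Bool) : Bool :=
  start N pw (fun p acc =>
    force (dg N pw p) fun pd => force (dg N pw m) fun md => force (Nat.gcd pd N) fun d =>
      cond (Nat.beq (Nat.mod md d) 0)
        (force (Nat.add m (Nat.mul (fac N pd md) p)) fun m' =>
          cond (cond (Nat.beq d 1) true (Nat.beq p 0)) (K m' acc)
            (force (Nat.mul p (Nat.div N d)) fun p' => K m' (p' :: acc)))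
        true) gs []

/-- Impose zero entries at all places of a list. -/
def run (N : ℕ) (K : List ℕ → Bool) : List ℕ → ℕ → List ℕ → Bool
  | [], _, gs => K gs
  | pw :: S, m, gs => impose N pw m gs fun m' gs' => run N K S m' gs'

/-- The two tests for a set `S` of bottom places: no vector of the coset vanishes on `S` modulo
`81`, and at most one generator is left when zeros are imposed on `S` modulo `3`. -/
def leafCheck (m0 : ℕ) (gs0 : List ℕ) (S : List ℕ) : Bool :=
  cond (run 81 (fun _ => false) S m0 gs0)
    (run 3 (fun gs => Nat.ble gs.length 1) S 0 gs0) false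

/-- Go through the bottom places that vanish modulo `3` and decide for each whether it is one of
the at most `k` further places not divisible by `9` after division by `3`. -/
def dfs (m0 : ℕ) (gs0 : List ℕ) : List ℕ → ℕ → ℕ → List ℕ → List ℕ → Bool
  | [], k, _, _, S => cond (Nat.beq k 0) (leafCheck m0 gs0 S) false
  | pw :: zb, k, m, gs, S =>
    cond (cond (Nat.beq k 0) true (dfs m0 gs0 zb (Nat.pred k) m gs S))
      (impose 9 pw m gs fun m' gs' => dfs m0 gs0 zb k m' gs' (pw :: S)) false

/-- The same decision for the top places that vanish modulo `3`; the rows of the others drop out. -/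
def extras (m : ℕ) (zb : List ℕ) : List ℕ → ℕ → List ℕ → Bool
  | [], k, gs => dfs m gs zb k m gs []
  | z :: zr, k, gs =>
    cond (cond (Nat.beq k 0) true (extras m zb zr (Nat.pred k) (z :: gs)))
      (extras m zb zr k gs) false

/-- The ballot condition `23 * (prefix sum) ≤ W * (prefix length)`. -/
def ballot (W : ℕ) : List ℕ → ℕ → ℕ → Bool
  | [], _, _ => true
  | x :: xs, s, k => force (Nat.add s x) fun s' => force (Nat.succ k) fun k' =>
     cond (Nat.ble (Nat.mul 23 s') (Nat.mul W k')) (ballot W xs s' k') false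

/-- The scalar product of two lists, passed to `K`. -/
def dot : List ℕ → List ℕ → ℕ → (ℕ → Bool) → Bool
  | x :: xs, y :: ys, a, K => force (Nat.add a (Nat.mul x y)) fun a' => dot xs ys a' K
  | [], _, a, K => K a
  | _ :: _, [], a, K => K a

/-- No cyclic autocorrelation at the given shifts exceeds `a`. -/
def corrMax (l : List ℕ) (a : ℕ) : List ℕ → Bool
  | [] => true
  | d :: ds => dot l ((l ++ l).drop d) 0 fun b => cond (Nat.ble b a) (corrMax l a ds) false

/-- Among the shifts that are quadratic residues modulo `23`, the cyclic autocorrelation of the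
list is largest at the shift `1`. -/
def canon (l : List ℕ) : Bool :=
  dot l ((l ++ l).drop 1) 0 fun a => corrMax l a [2, 3, 4, 6, 8, 9, 12, 13, 16, 18]

/-- Go through the bottom places of `r`, the combination of the rows with coefficients the chosen
top residues: update the weight modulo `3`, the packed vector `m` of the quotients by `3`, the
list of places that vanish modulo `3`, and the list of support bits. -/
def bottom (r : ℕ) (K : ℕ → ℕ → List ℕ → List ℕ → Bool) :
    List ℕ → ℕ → ℕ → ℕ → List ℕ → List ℕ → Bool
  | [], _, w, m, zb, bits => K w m zb bits
  | pw :: pws, k, w, m, zb, bits =>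
    force (Nat.mod (Nat.div r pw) 43046721) fun x => force (Nat.succ k) fun k' =>
    force (Nat.add m (Nat.mul (Nat.div x 3) pw)) fun m' =>
    cond (Nat.beq (Nat.mod x 3) 0)
      (bottom r K pws k' w m' (pw :: zb) (0 :: bits))
      (force (Nat.succ w) fun w' =>
        cond (Nat.ble (Nat.mul 23 w') (Nat.mul 12 k'))
          (bottom r K pws k' w' m' zb (1 :: bits)) true)

/-- The check for one choice of top residues. Supports that are not in normal form are skipped. -/
def leaf (pws : List ℕ) (r nz : ℕ) (bits F Z : List ℕ) : Bool :=
  bottom r (fun w m zb bits' =>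
    cond (cond (ballot (Nat.sub w (bits'.headD 0)) bits'.tail.reverse 0 0)
        (cond (Nat.ble w 9) (canon bits'.tail.reverse) true) false)
      (extras m zb Z (Nat.sub 12 w) F) true) pws 12 nz 0 [] bits

/-- Enumerate the residues modulo `3` of the top coordinates, subject to the ballot condition and
with first nonzero residue `1`. -/
def enum (pws : List ℕ) : List ℕ → ℕ → ℕ → ℕ → List ℕ → List ℕ → List ℕ → Bool
  | [], _, nz, r, bits, F, Z => cond (Nat.beq nz 0) true (leaf pws r nz bits F Z)
  | a :: rows, k, nz, r, bits, F, Z => force (Nat.succ k) fun k' =>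
    cond (enum pws rows k' nz r (0 :: bits) F (a :: Z))
      (force (Nat.succ nz) fun nz' =>
        cond (Nat.ble (Nat.mul 2 nz') k')
          (cond (force (Nat.add r a) fun r' => enum pws rows k' nz' r' (1 :: bits) (a :: F) Z)
            (cond (Nat.beq nz 0) true
              (force (Nat.add r (Nat.mul 2 a)) fun r' =>
                enum pws rows k' nz' r' (1 :: bits) (a :: F) Z))
            false)
          true)
      false

/-- The number with the given digits in base `B`, lowest digit first. -/
def pack (B : ℕ) : List ℕ → ℕ
  | [] => 0
  | x :: xs => x + B * pack B xs

/-- Normalise all members of a list before passing it on. -/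
def forceL (K : List ℕ → Bool) : List ℕ → List ℕ → Bool
  | [], acc => K acc.reverse
  | x :: xs, acc => force x fun x' => forceL K xs (x' :: acc)

/-- The base for packing rows: so large that no carries ever occur, and divisible by `81` so that
digits can be reduced modulo `3`, `9`, `81` without knowing the higher digits. -/
def bigB : ℕ := 3 ^ 60

/-- The whole search. -/
def checkAll : Bool :=
  forceL (fun pws => forceL (fun rows => enum pws rows 0 0 0 [] [] []) (tabA.map (pack bigB)) [])
    ((List.range 12).map (fun j => bigB ^ j)) []

theorem checkAll_true : checkAll = true := by decide +kernel


/-! ### Soundness of the elimination steps -/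

@[simp] theorem force_eq (x : ℕ) (K : ℕ → Bool) : force x K = K x := by
  cases x <;> rfl

/-- `r` is the packed form of the vector `v` with entries at most `b`. -/
def Rep (b r : ℕ) (v : ℕ → ℕ) : Prop :=
  (∀ i < 12, v i ≤ b) ∧ r = ∑ i ∈ Finset.range 12, v i * bigB ^ i

theorem Rep.mono {b b' r : ℕ} {v : ℕ → ℕ} (h : Rep b r v) (hb : b ≤ b') : Rep b' r v :=
  ⟨fun i hi => (h.1 i hi).trans hb, h.2⟩

theorem Rep.axpy {b b' r p f : ℕ} {v w : ℕ → ℕ} (hr : Rep b r v) (hp : Rep b' p w) :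
    Rep (b + f * b') (Nat.add r (Nat.mul f p)) (fun i => v i + f * w i) := by
  refine ⟨fun i hi => Nat.add_le_add (hr.1 i hi) (Nat.mul_le_mul_left _ (hp.1 i hi)), ?_⟩
  change r + f * p = _
  rw [hr.2, hp.2, Finset.mul_sum, ← Finset.sum_add_distrib]
  exact Finset.sum_congr rfl fun i _ => by ring

theorem Rep.smul {b p f : ℕ} {w : ℕ → ℕ} (hp : Rep b p w) :
    Rep (b * f) (Nat.mul p f) (fun i => w i * f) := by
  refine ⟨fun i hi => Nat.mul_le_mul_right _ (hp.1 i hi), ?_⟩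
  change p * f = _
  rw [hp.2, Finset.sum_mul]
  exact Finset.sum_congr rfl fun i _ => by ring

theorem rep_zero (b : ℕ) : Rep b 0 (fun _ => 0) := ⟨fun _ _ => Nat.zero_le _, by simp⟩

theorem digit_sum_lt {B b : ℕ} (hb : b < B) (v : ℕ → ℕ) (j : ℕ) (hv : ∀ i < j, v i ≤ b) :
    ∑ i ∈ Finset.range j, v i * B ^ i < B ^ j := by
  induction j with
  | zero => simp
  | succ j ih =>
    rw [Finset.sum_range_succ, pow_succ]
    have h1 := ih fun i hi => hv i (by omega)
    have h2 : v j + 1 ≤ B := by have := hv j (by omega); omega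
    nlinarith [Nat.mul_le_mul_left (B ^ j) h2]

theorem digit_eq {B b N : ℕ} (hb : b < B) (hN : N ∣ B) (v : ℕ → ℕ) (n j : ℕ)
    (hv : ∀ i < n, v i ≤ b) (hj : j < n) :
    ((∑ i ∈ Finset.range n, v i * B ^ i) / B ^ j) % N = v j % N := by
  obtain ⟨l, rfl⟩ : ∃ l, n = j + 1 + l := ⟨n - (j + 1), by omega⟩
  rw [Finset.sum_range_add, Finset.sum_range_succ]
  have h1 := digit_sum_lt hb v j fun i hi => hv i (by omega)
  have h2 : ∑ x ∈ Finset.range l, v (j + 1 + x) * B ^ (j + 1 + x) =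
      B ^ j * (B * ∑ x ∈ Finset.range l, v (j + 1 + x) * B ^ x) := by
    rw [Finset.mul_sum, Finset.mul_sum]
    exact Finset.sum_congr rfl fun i _ => by ring
  have hB : 0 < B ^ j := Nat.pow_pos (by omega)
  rw [h2, show ∀ s t : ℕ, s + v j * B ^ j + B ^ j * t = s + B ^ j * (v j + t) by intros; ring,
    Nat.add_mul_div_left _ _ hB, Nat.div_eq_of_lt h1, zero_add]
  obtain ⟨q, rfl⟩ := hN
  rw [mul_assoc, Nat.add_mul_mod_self_left]

theorem Rep.dg {b r N j : ℕ} {v : ℕ → ℕ} (h : Rep b r v) (hb : b < bigB) (hN : N ∣ bigB)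
    (hj : j < 12) : dg N (bigB ^ j) r = v j % N := by
  rw [h.2]
  exact digit_eq hb hN v 12 j h.1 hj

/-- `w` lies, modulo `N`, in the span of the vectors packed in the list. -/
def Sp (N b : ℕ) : List ℕ → (ℕ → ℤ) → Prop
  | [], w => ∀ i < 12, (N : ℤ) ∣ w i
  | g :: gs, w => ∃ (v : ℕ → ℕ) (a : ℤ), Rep b g v ∧ Sp N b gs (fun i => w i - a * v i)

theorem Sp.mono {N b b' : ℕ} (hb : b ≤ b') : ∀ {gs : List ℕ} {w : ℕ → ℤ},
    Sp N b gs w → Sp N b' gs w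
  | [], _, h => h
  | _ :: _, _, ⟨v, a, hv, h⟩ => ⟨v, a, hv.mono hb, h.mono hb⟩

theorem Sp.congr {N b : ℕ} : ∀ {gs : List ℕ} {w w' : ℕ → ℤ},
    Sp N b gs w → (∀ i < 12, (N : ℤ) ∣ w i - w' i) → Sp N b gs w'
  | [], w, w', h, hw => fun i hi => by
      have := dvd_sub (h i hi) (hw i hi)
      simpa using this
  | _ :: _, w, w', ⟨v, a, hv, h⟩, hw => ⟨v, a, hv, h.congr fun i hi => by
      have := hw i hi
      ring_nf at this ⊢
      exact this⟩

/-- `e` lies in the coset `m + ⟨gs⟩` modulo `N`. -/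
def Coset (N b m : ℕ) (gs : List ℕ) (e : ℕ → ℤ) : Prop :=
  ∃ v : ℕ → ℕ, Rep b m v ∧ Sp N b gs (fun i => e i - v i)

/-- The moduli that occur. -/
def Good (N : ℕ) : Prop := N = 3 ∨ N = 9 ∨ N = 81

theorem Good.dvd {N : ℕ} (h : Good N) : N ∣ bigB := by
  rcases h with rfl | rfl | rfl
  · exact dvd_pow_self 3 (by norm_num)
  · exact pow_dvd_pow 3 (by norm_num : 2 ≤ 60)
  · exact pow_dvd_pow 3 (by norm_num : 4 ≤ 60)

theorem Good.pos {N : ℕ} (h : Good N) : 0 < N := by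
  rcases h with rfl | rfl | rfl <;> norm_num

theorem Good.le {N : ℕ} (h : Good N) : N ≤ 81 := by
  rcases h with rfl | rfl | rfl <;> norm_num

theorem fac_le (N p g : ℕ) : fac N p g ≤ N := Nat.sub_le _ _

/-- The test behind `fac_spec`. -/
def facTest (N : ℕ) : Bool :=
  (List.range N).all fun p => (List.range N).all fun g =>
    cond (Nat.beq (g % Nat.gcd p N) 0) (Nat.beq ((g + fac N p g * p) % N) 0)
      (Nat.beq ((p + fac N g p * g) % N) 0)

theorem facTest_true {N : ℕ} (h : Good N) : facTest N = true := by
  rcases h with rfl | rfl | rfl <;> decide +kernel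

theorem fac_spec {N p g : ℕ} (h : Good N) (hp : p < N) (hg : g < N) :
    if g % Nat.gcd p N = 0 then N ∣ g + fac N p g * p else N ∣ p + fac N g p * g := by
  have := facTest_true h
  unfold facTest at this
  rw [List.all_eq_true] at this
  have := this p (List.mem_range.2 hp)
  rw [List.all_eq_true] at this
  have := this g (List.mem_range.2 hg)
  by_cases hc : g % Nat.gcd p N = 0
  · simp only [hc, if_true]
    simp only [hc, Nat.beq_eq, cond_eq_ite] at this
    exact Nat.dvd_of_mod_eq_zero (by simpa using this)
  · simp only [hc, if_false]
    have hc' : Nat.beq (g % Nat.gcd p N) 0 = false := by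
      rw [← Bool.not_eq_true, Nat.beq_eq]; exact hc
    simp only [hc', cond_false, Nat.beq_eq] at this
    exact Nat.dvd_of_mod_eq_zero this

/-- Transfer of `fac_spec` from residues to the entries themselves. -/
theorem fac_int {N f x y : ℕ} (h : N ∣ y % N + f * (x % N)) : (N : ℤ) ∣ (y : ℤ) + f * x := by
  have h1 : y + f * x ≡ y % N + f * (x % N) [MOD N] :=
    Nat.ModEq.add (Nat.mod_modEq _ _).symm ((Nat.mod_modEq _ _).symm.mul_left f)
  have := (Nat.modEq_zero_iff_dvd.1 (h1.trans (Nat.modEq_zero_iff_dvd.2 h)))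
  exact_mod_cast this

theorem Sp.of_eq {N b : ℕ} {gs : List ℕ} {w w' : ℕ → ℤ} (h : Sp N b gs w)
    (e : ∀ i, w' i = w i) : Sp N b gs w' := by
  rw [show w' = w from funext e]
  exact h

theorem beq_false {m n : ℕ} (h : Nat.beq m n = false) : m ≠ n := by
  rintro rfl
  rw [Nat.beq_refl] at h
  exact absurd h (by decide)

theorem clearCol_sound {N b j : ℕ} (hN : Good N) (hb : b < bigB) (hj : j < 12)
    {K : ℕ → List ℕ → Bool} {E : Set (ℕ → ℤ)} : ∀ {gs : List ℕ} {p : ℕ} {acc : List ℕ},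
    clearCol N (bigB ^ j) K gs p acc = true →
    (∀ w ∈ E, ∃ (v : ℕ → ℕ) (a : ℤ) (w1 w2 : ℕ → ℤ), Rep b p v ∧ Sp N b gs w1 ∧
      Sp N (b + N * b) acc w2 ∧ (N : ℤ) ∣ w2 j ∧ ∀ i, w i = a * v i + w1 i + w2 i) →
    ∃ p' acc', K p' acc' = true ∧ ∀ w ∈ E, ∃ (v : ℕ → ℕ) (a : ℤ) (w2 : ℕ → ℤ), Rep b p' v ∧
      Sp N (b + N * b) acc' w2 ∧ (N : ℤ) ∣ w2 j ∧ ∀ i < 12, (N : ℤ) ∣ w i - (a * v i + w2 i)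
  | [], p, acc, h, hE => ⟨p, acc, h, fun w hw => by
      obtain ⟨v, a, w1, w2, hv, h1, h2, h3, h4⟩ := hE w hw
      refine ⟨v, a, w2, hv, h2, h3, fun i hi => ?_⟩
      rw [h4 i]
      have := h1 i hi
      ring_nf
      exact this⟩
  | g :: gs, p, acc, h, hE => by
      have hpd : dg N (bigB ^ j) p < N := Nat.mod_lt _ hN.pos
      have hgd : dg N (bigB ^ j) g < N := Nat.mod_lt _ hN.pos
      have hspec := fac_spec hN hpd hgd
      simp only [clearCol, force_eq] at h
      cases hc : Nat.beq (Nat.mod (dg N (bigB ^ j) g) (Nat.gcd (dg N (bigB ^ j) p) N)) 0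
      · rw [hc] at h
        have hc' : ¬ dg N (bigB ^ j) g % Nat.gcd (dg N (bigB ^ j) p) N = 0 := beq_false hc
        rw [if_neg hc'] at hspec
        generalize hf : fac N (dg N (bigB ^ j) g) (dg N (bigB ^ j) p) = f at h hspec
        have hfN : f ≤ N := hf ▸ fac_le _ _ _
        refine clearCol_sound hN hb hj h fun w hw => ?_
        obtain ⟨v, a, w1, w2, hv, ⟨v1, a1, hv1, h1⟩, h2, h3, h4⟩ := hE w hw
        rw [hv.dg hb hN.dvd hj, hv1.dg hb hN.dvd hj] at hspec
        have hz := fac_int hspec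
        refine ⟨v1, a1 - a * f, _, fun i => w2 i + a * (v i + f * v1 i), hv1, h1,
          ⟨_, a, (hv.axpy hv1).mono ?_, h2.of_eq fun i => ?_⟩, ?_, fun i => ?_⟩
        · exact Nat.add_le_add_left (Nat.mul_le_mul_right _ hfN) _
        · push_cast; ring
        · exact dvd_add h3 (hz.mul_left _)
        · rw [h4 i]; ring
      · rw [hc] at h
        have hc' : dg N (bigB ^ j) g % Nat.gcd (dg N (bigB ^ j) p) N = 0 :=
          Nat.eq_of_beq_eq_true hc
        rw [if_pos hc'] at hspec
        generalize hf : fac N (dg N (bigB ^ j) p) (dg N (bigB ^ j) g) = f at h hspec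
        have hfN : f ≤ N := hf ▸ fac_le _ _ _
        refine clearCol_sound hN hb hj h fun w hw => ?_
        obtain ⟨v, a, w1, w2, hv, ⟨v1, a1, hv1, h1⟩, h2, h3, h4⟩ := hE w hw
        rw [hv.dg hb hN.dvd hj, hv1.dg hb hN.dvd hj] at hspec
        have hz := fac_int hspec
        refine ⟨v, a - a1 * f, _, fun i => w2 i + a1 * (v1 i + f * v i), hv, h1,
          ⟨_, a1, (hv1.axpy hv).mono ?_, h2.of_eq fun i => ?_⟩, ?_, fun i => ?_⟩
        · exact Nat.add_le_add_left (Nat.mul_le_mul_right _ hfN) _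
        · push_cast; ring
        · exact dvd_add h3 (hz.mul_left _)
        · rw [h4 i]; ring

theorem start_sound {N b j : ℕ} (hN : Good N) (hb : b < bigB) (hj : j < 12)
    {K : ℕ → List ℕ → Bool} {E : Set (ℕ → ℤ)} : ∀ {gs : List ℕ} {acc : List ℕ},
    start N (bigB ^ j) K gs acc = true →
    (∀ w ∈ E, ∃ (w1 w2 : ℕ → ℤ), Sp N b gs w1 ∧
      Sp N (b + N * b) acc w2 ∧ (N : ℤ) ∣ w2 j ∧ ∀ i, w i = w1 i + w2 i) →
    ∃ p' acc', K p' acc' = true ∧ ∀ w ∈ E, ∃ (v : ℕ → ℕ) (a : ℤ) (w2 : ℕ → ℤ), Rep b p' v ∧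
      Sp N (b + N * b) acc' w2 ∧ (N : ℤ) ∣ w2 j ∧ ∀ i < 12, (N : ℤ) ∣ w i - (a * v i + w2 i)
  | [], acc, h, hE => ⟨0, acc, h, fun w hw => by
      obtain ⟨w1, w2, h1, h2, h3, h4⟩ := hE w hw
      refine ⟨_, 0, w2, rep_zero b, h2, h3, fun i hi => ?_⟩
      rw [h4 i]
      have := h1 i hi
      ring_nf
      exact this⟩
  | g :: gs, acc, h, hE => by
      simp only [start] at h
      cases hc : Nat.beq (dg N (bigB ^ j) g) 0
      · rw [hc] at h
        refine clearCol_sound hN hb hj h fun w hw => ?_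
        obtain ⟨w1, w2, ⟨v1, a1, hv1, h1⟩, h2, h3, h4⟩ := hE w hw
        exact ⟨v1, a1, _, w2, hv1, h1, h2, h3, fun i => by rw [h4 i]; ring⟩
      · rw [hc] at h
        refine start_sound hN hb hj h fun w hw => ?_
        obtain ⟨w1, w2, ⟨v1, a1, hv1, h1⟩, h2, h3, h4⟩ := hE w hw
        have h0 := Nat.eq_of_beq_eq_true hc
        rw [hv1.dg hb hN.dvd hj] at h0
        have h0' : (N : ℤ) ∣ v1 j := by exact_mod_cast Nat.dvd_of_mod_eq_zero h0
        refine ⟨_, fun i => w2 i + a1 * v1 i, h1, ⟨v1, a1, hv1.mono (by omega),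
          h2.of_eq fun i => by ring⟩, dvd_add h3 (h0'.mul_left _), fun i => by rw [h4 i]; ring⟩

/-- The solutions of `x * p ≡ 0` modulo `N`. -/
theorem dvd_of_mul_dvd {N p : ℕ} (hN : 0 < N) {x : ℤ} (h : (N : ℤ) ∣ x * p) :
    ((N / Nat.gcd (p % N) N : ℕ) : ℤ) ∣ x := by
  rw [show Nat.gcd (p % N) N = Nat.gcd p N by rw [Nat.gcd_comm p N, Nat.gcd_rec N p]]
  set d := Nat.gcd p N with hd
  have hdpos : 0 < d := Nat.gcd_pos_of_pos_right _ hN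
  have hcop : Nat.Coprime (N / d) (p / d) := by
    rw [hd, Nat.gcd_comm]
    exact Nat.coprime_div_gcd_div_gcd (Nat.gcd_pos_of_pos_left _ hN)
  obtain ⟨N', hN'⟩ : d ∣ N := Nat.gcd_dvd_right _ _
  obtain ⟨p', hp'⟩ : d ∣ p := Nat.gcd_dvd_left _ _
  have e1 : N / d = N' := by rw [hN']; exact Nat.mul_div_cancel_left _ hdpos
  have e2 : p / d = p' := by rw [hp']; exact Nat.mul_div_cancel_left _ hdpos
  rw [e1, e2] at hcop
  rw [e1]
  rw [hN', hp'] at h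
  push_cast at h
  rw [show x * ((d : ℤ) * p') = d * (x * p') by ring] at h
  have h' := Int.dvd_of_mul_dvd_mul_left (by exact_mod_cast hdpos.ne') h
  exact (Nat.isCoprime_iff_coprime.2 hcop).dvd_of_dvd_mul_right h'

/-- Soundness of `impose` for a whole set of vectors at once. -/
theorem impose_sound {N b j m : ℕ} (hN : Good N) (hb : b < bigB) (hj : j < 12) {gs : List ℕ}
    {K : ℕ → List ℕ → Bool} {E : Set (ℕ → ℤ)} (hne : E.Nonempty)
    (h : impose N (bigB ^ j) m gs K = true)
    (hE : ∀ e ∈ E, Coset N b m gs e ∧ (N : ℤ) ∣ e j) :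
    ∃ m' gs', K m' gs' = true ∧ ∀ e ∈ E, Coset N (b * 82) m' gs' e := by
  have hN81 := hN.le
  have hbN : b + N * b ≤ b * 82 := by nlinarith
  have hbb : b ≤ b * 82 := by omega
  -- vectors of the coset are translated by the vector packed in `m`
  obtain ⟨e0, he0⟩ := hne
  obtain ⟨⟨vm, hvm, -⟩, -⟩ := hE e0 he0
  have huniq : ∀ v, Rep b m v → ∀ i < 12, (v i) % N = vm i % N := fun v hv i hi => by
    rw [← hv.dg hb hN.dvd hi, ← hvm.dg hb hN.dvd hi]
  obtain ⟨p, acc, hK, hP⟩ := start_sound (b := b) hN hb hj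
    (E := {w | ∃ e ∈ E, ∀ i, w i = e i - vm i}) h fun w hw => by
      obtain ⟨e, he, hw⟩ := hw
      obtain ⟨⟨v, hv, hs⟩, hz⟩ := hE e he
      refine ⟨w, fun _ => 0, hs.congr fun i hi => ?_, fun i _ => dvd_zero _, dvd_zero _,
        fun i => by ring⟩
      rw [hw i, show e i - v i - (e i - vm i) = ((vm i : ℕ) : ℤ) - ((v i : ℕ) : ℤ) by ring]
      exact (Nat.modEq_iff_dvd.1 (huniq v hv i hi))
  simp only [force_eq] at hK
  have hpd : dg N (bigB ^ j) p < N := Nat.mod_lt _ hN.pos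
  have hmd : dg N (bigB ^ j) m < N := Nat.mod_lt _ hN.pos
  have hspec := fac_spec hN hpd hmd
  generalize hf : fac N (dg N (bigB ^ j) p) (dg N (bigB ^ j) m) = f at hK hspec
  have hfN : f ≤ N := hf ▸ fac_le _ _ _
  -- every vector gives a solution of `m_j + a * p_j ≡ 0`
  have key : ∀ e ∈ E, ∃ (v : ℕ → ℕ) (a : ℤ) (w2 : ℕ → ℤ), Rep b p v ∧
      Sp N (b + N * b) acc w2 ∧ (∀ i < 12, (N : ℤ) ∣ e i - vm i - (a * v i + w2 i)) ∧
      (N : ℤ) ∣ vm j + a * v j := fun e he => by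
    obtain ⟨v, a, w2, hv, hs, hz, hw⟩ := hP (fun i => e i - vm i) ⟨e, he, fun i => rfl⟩
    refine ⟨v, a, w2, hv, hs, hw, ?_⟩
    have := dvd_sub (dvd_sub (hE e he).2 (hw j hj)) hz
    rwa [show e j - (e j - vm j - (a * v j + w2 j)) - w2 j = vm j + a * v j by ring] at this
  have hdiv : (dg N (bigB ^ j) m) % Nat.gcd (dg N (bigB ^ j) p) N = 0 := by
    obtain ⟨v, a, w2, hv, hs, hw, hz⟩ := key e0 he0
    rw [hv.dg hb hN.dvd hj, hvm.dg hb hN.dvd hj]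
    set d := Nat.gcd (v j % N) N with hd
    have d1 : d ∣ v j % N := Nat.gcd_dvd_left _ _
    have d2 : d ∣ N := Nat.gcd_dvd_right _ _
    have d3 : d ∣ v j := (Nat.dvd_mod_iff d2).1 d1
    have d4 : (d : ℤ) ∣ vm j := by
      have := dvd_sub ((Int.natCast_dvd_natCast.2 d2).trans hz)
        ((Int.natCast_dvd_natCast.2 d3).mul_left a)
      simpa using this
    exact Nat.mod_eq_zero_of_dvd ((Nat.dvd_mod_iff d2).2 (by exact_mod_cast d4))
  rw [if_pos hdiv] at hspec
  rw [show Nat.beq (Nat.mod (dg N (bigB ^ j) m) (Nat.gcd (dg N (bigB ^ j) p) N)) 0 = true from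
    (congrArg (fun t => Nat.beq t 0) hdiv).trans rfl, cond_true] at hK
  -- the coefficient of the pivot after translation by `f` times the pivot
  have key2 : ∀ e ∈ E, ∃ (v v' : ℕ → ℕ) (a : ℤ) (w2 : ℕ → ℤ), Rep b p v ∧
      Rep (b * 82) (Nat.add m (Nat.mul f p)) v' ∧
      Sp N (b * 82) acc w2 ∧ (∀ i < 12, (N : ℤ) ∣ e i - v' i - (a * v i + w2 i)) ∧
      ((N / Nat.gcd (dg N (bigB ^ j) p) N : ℕ) : ℤ) ∣ a := fun e he => by
    obtain ⟨v, a, w2, hv, hs, hw, hz⟩ := key e he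
    refine ⟨v, _, a - f, w2, hv, (hvm.axpy hv).mono
      ((Nat.add_le_add_left (Nat.mul_le_mul_right _ hfN) _).trans hbN), hs.mono hbN,
      fun i hi => ?_, ?_⟩
    · have := hw i hi
      push_cast
      rwa [show e i - (vm i + f * v i) - ((a - f) * v i + w2 i) =
        e i - vm i - (a * v i + w2 i) by ring]
    · rw [hv.dg hb hN.dvd hj]
      apply dvd_of_mul_dvd hN.pos
      rw [hv.dg hb hN.dvd hj, hvm.dg hb hN.dvd hj] at hspec
      have := dvd_sub hz (fac_int hspec)
      rwa [show vm j + a * v j - (vm j + f * v j) = (a - f) * (v j : ℤ) by ring] at this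
  cases hc : cond (Nat.beq (Nat.gcd (dg N (bigB ^ j) p) N) 1) true (Nat.beq p 0)
  · rw [hc] at hK
    refine ⟨_, _, hK, fun e he => ?_⟩
    obtain ⟨v, v', a, w2, hv, hv', hs, hw, q, hq⟩ := key2 e he
    refine ⟨v', hv', _, q, hv.smul.mono ?_, hs.congr fun i hi => ?_⟩
    · exact Nat.mul_le_mul_left _ ((Nat.div_le_self _ _).trans (hN81.trans (by norm_num)))
    · have := hw i hi
      rw [hq] at this
      change (N : ℤ) ∣ w2 i - (e i - v' i - q * ((v i * (N / _) : ℕ) : ℤ))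
      rw [← dvd_neg, Nat.cast_mul]
      ring_nf at this ⊢
      exact this
  · rw [hc] at hK
    refine ⟨_, _, hK, fun e he => ?_⟩
    obtain ⟨v, v', a, w2, hv, hv', hs, hw, hq⟩ := key2 e he
    refine ⟨v', hv', hs.congr fun i hi => ?_⟩
    have hav : (N : ℤ) ∣ a * v i := by
      cases hd : Nat.beq (Nat.gcd (dg N (bigB ^ j) p) N) 1
      · rw [hd] at hc
        have hp0 : p = 0 := Nat.eq_of_beq_eq_true hc
        have : v i % N = 0 := by
          rw [← hv.dg hb hN.dvd hi, hp0]
          change 0 / bigB ^ i % N = 0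
          simp
        exact (Int.natCast_dvd_natCast.2 (Nat.dvd_of_mod_eq_zero this)).mul_left a
      · rw [Nat.eq_of_beq_eq_true hd, Nat.div_one] at hq
        exact hq.mul_right _
    have := dvd_add (hw i hi) hav
    rw [← dvd_neg]
    ring_nf at this ⊢
    exact this

theorem run_sound {N : ℕ} (hN : Good N) {K : List ℕ → Bool} {E : Set (ℕ → ℤ)}
    (hne : E.Nonempty) : ∀ {S : List ℕ} {b m : ℕ} {gs : List ℕ},
    b * 82 ^ S.length < bigB → (∀ j ∈ S, j < 12) →
    run N K (S.map (bigB ^ ·)) m gs = true →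
    (∀ e ∈ E, Coset N b m gs e ∧ ∀ j ∈ S, (N : ℤ) ∣ e j) →
    ∃ m' gs', K gs' = true ∧ ∀ e ∈ E, Coset N (b * 82 ^ S.length) m' gs' e
  | [], b, m, gs, _, _, h, hE => ⟨m, gs, h, fun e he => by simpa using (hE e he).1⟩
  | j :: S, b, m, gs, hb, hS, h, hE => by
      have hb1 : b < bigB :=
        lt_of_le_of_lt (Nat.le_mul_of_pos_right _ (by positivity)) hb
      obtain ⟨m', gs', h', hE'⟩ := impose_sound hN hb1 (hS j (by simp)) hne h
        fun e he => ⟨(hE e he).1, (hE e he).2 j (by simp)⟩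
      have e1 : b * 82 ^ (j :: S).length = b * 82 * 82 ^ S.length := by
        rw [List.length_cons, pow_succ]; ring
      rw [e1] at hb ⊢
      exact run_sound hN hne hb (fun i hi => hS i (by simp [hi])) h'
        fun e he => ⟨hE' e he, fun i hi => (hE e he).2 i (by simp [hi])⟩


/-! ### Soundness of the search -/

/-- The entries of the matrix `A`. -/
def mA (i j : ℕ) : ℕ := (tabA.getD i []).getD j 0

/-- The integral codeword with top part `c` (extended by `A`), as a function of the coordinate
`n < 24`; the coordinate `23` is `∞`. -/
def word (c : ℕ → ℤ) (n : ℕ) : ℤ :=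
  if n < 12 then c n else ∑ i ∈ Finset.range 12, c i * mA i (n - 12)

theorem word_top (c : ℕ → ℤ) {n : ℕ} (h : n < 12) : word c n = c n := if_pos h

theorem word_bot (c : ℕ → ℤ) (j : ℕ) :
    word c (12 + j) = ∑ i ∈ Finset.range 12, c i * mA i j := by
  simp [word]

/-- The packed rows of `A`. -/
def rowP (i : ℕ) : ℕ := pack bigB (tabA.getD i [])

theorem pack_eq (B : ℕ) (l : List ℕ) :
    pack B l = ∑ i ∈ Finset.range l.length, l.getD i 0 * B ^ i := by
  induction l with
  | nil => simp [pack]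
  | cons x xs ih =>
    rw [pack, ih, List.length_cons, Finset.sum_range_succ', Finset.mul_sum, add_comm]
    simp only [List.getD_cons_succ, List.getD_cons_zero, pow_zero, mul_one]
    congr 1
    exact Finset.sum_congr rfl fun i _ => by ring

theorem tabA_length : ∀ i < 12, (tabA.getD i []).length = 12 := by decide

theorem mA_le : ∀ i < 12, ∀ j < 12, mA i j ≤ 728 := by decide +kernel

theorem rowP_rep {i : ℕ} (hi : i < 12) : Rep 728 (rowP i) (mA i) := by
  refine ⟨fun j hj => mA_le i hi j hj, ?_⟩
  rw [rowP, pack_eq, tabA_length i hi]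
  rfl

theorem mA_gram : ∀ i < 12, ∀ k < 12,
    ((∑ j ∈ Finset.range 12, mA i j * mA k j) + if i = k then 1 else 0) % 3 = 0 := by
  decide +kernel

theorem forceL_eq (K : List ℕ → Bool) : ∀ l acc, forceL K l acc = K (acc.reverse ++ l)
  | [], acc => by simp [forceL]
  | x :: xs, acc => by simp [forceL, forceL_eq K xs]

/-- The residue modulo `3` of a coordinate. -/
def res (c : ℕ → ℤ) (i : ℕ) : ℕ := (word c i % 3).toNat

/-- The support bit modulo `3` of a coordinate. -/
def bit (c : ℕ → ℤ) (i : ℕ) : ℕ := if (3 : ℤ) ∣ word c i then 0 else 1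

/-- The number of the first `k` coordinates that are nonzero modulo `3`. -/
def nz (c : ℕ → ℤ) (k : ℕ) : ℕ := ∑ i ∈ Finset.range k, bit c i

/-- The support bits of the first `k` coordinates, last one first. -/
def bitsL (c : ℕ → ℤ) (k : ℕ) : List ℕ := ((List.range k).map (bit c)).reverse

/-- The first `k` coordinates that are nonzero modulo `3`, last one first. -/
def fIdx (c : ℕ → ℤ) (k : ℕ) : List ℕ :=
  ((List.range k).filter fun i => ¬ (3 : ℤ) ∣ word c i).reverse

/-- The first `k` coordinates that are zero modulo `3`, last one first. -/
def zIdx (c : ℕ → ℤ) (k : ℕ) : List ℕ :=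
  ((List.range k).filter fun i => (3 : ℤ) ∣ word c i).reverse

/-- The first `k` bottom coordinates that are zero modulo `3`, last one first. -/
def bIdx (c : ℕ → ℤ) (k : ℕ) : List ℕ :=
  ((List.range k).filter fun j => (3 : ℤ) ∣ word c (12 + j)).reverse

/-- The packed combination of the first `k` rows with the top residues as coefficients. -/
def rr (c : ℕ → ℤ) (k : ℕ) : ℕ := ∑ i ∈ Finset.range k, res c i * rowP i

/-- The bottom entries belonging to the top residues. -/
def xx (c : ℕ → ℤ) (j : ℕ) : ℕ := ∑ i ∈ Finset.range 12, res c i * mA i j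

/-- The packed quotients by `3` of the first `l` bottom entries. -/
def mm (c : ℕ → ℤ) (l : ℕ) : ℕ := ∑ j ∈ Finset.range l, xx c j / 3 * bigB ^ j

/-- The bottom entries of the codeword divided by `3`, where these are divisible by `3`. -/
def ee (c : ℕ → ℤ) (j : ℕ) : ℤ :=
  (xx c j / 3 : ℕ) + ∑ i ∈ Finset.range 12, word c i / 3 * mA i j

theorem res_cast (c : ℕ → ℤ) (i : ℕ) : (res c i : ℤ) = word c i % 3 :=
  Int.toNat_of_nonneg (Int.emod_nonneg _ (by norm_num))

theorem res_le (c : ℕ → ℤ) (i : ℕ) : res c i ≤ 2 := by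
  have h1 := res_cast c i
  have h2 := Int.emod_lt_of_pos (word c i) (by norm_num : (0 : ℤ) < 3)
  omega

theorem word_bot_eq (c : ℕ → ℤ) (j : ℕ) :
    word c (12 + j) = xx c j + 3 * ∑ i ∈ Finset.range 12, word c i / 3 * mA i j := by
  rw [word_bot, xx, Nat.cast_sum, Finset.mul_sum, ← Finset.sum_add_distrib]
  refine Finset.sum_congr rfl fun i hi => ?_
  rw [Nat.cast_mul, res_cast, word_top c (Finset.mem_range.1 hi)]
  have := Int.emod_add_mul_ediv (c i) 3
  nlinarith

theorem word_bot_dvd (c : ℕ → ℤ) (j : ℕ) : (3 : ℤ) ∣ word c (12 + j) ↔ xx c j % 3 = 0 := by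
  rw [word_bot_eq]
  omega

theorem word_bot_ee (c : ℕ → ℤ) (j : ℕ) (h : (3 : ℤ) ∣ word c (12 + j)) :
    word c (12 + j) = 3 * ee c j := by
  have h1 := (word_bot_dvd c j).1 h
  rw [word_bot_eq, ee]
  push_cast
  omega

theorem rr_rep (c : ℕ → ℤ) : Rep 17472 (rr c 12) (xx c) := by
  constructor
  · intro j hj
    calc xx c j ≤ ∑ i ∈ Finset.range 12, 2 * 728 := Finset.sum_le_sum fun i hi =>
          Nat.mul_le_mul (res_le c i) (mA_le i (Finset.mem_range.1 hi) j hj)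
      _ = 17472 := by simp
  · rw [rr]
    simp only [xx, Finset.sum_mul]
    rw [Finset.sum_comm]
    refine Finset.sum_congr rfl fun i hi => ?_
    rw [(rowP_rep (Finset.mem_range.1 hi)).2, Finset.mul_sum]
    exact Finset.sum_congr rfl fun j _ => by ring

theorem mm_rep (c : ℕ → ℤ) : Rep 5824 (mm c 12) (fun j => xx c j / 3) :=
  ⟨fun j hj => Nat.div_le_of_le_mul ((rr_rep c).1 j hj), rfl⟩

theorem bit_succ (c : ℕ → ℤ) (k : ℕ) : bitsL c (k + 1) = bit c k :: bitsL c k := by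
  simp [bitsL, List.range_succ]

theorem fIdx_succ (c : ℕ → ℤ) (k : ℕ) :
    fIdx c (k + 1) = if (3 : ℤ) ∣ word c k then fIdx c k else k :: fIdx c k := by
  by_cases h : (3 : ℤ) ∣ word c k <;> simp [fIdx, List.range_succ, h]

theorem zIdx_succ (c : ℕ → ℤ) (k : ℕ) :
    zIdx c (k + 1) = if (3 : ℤ) ∣ word c k then k :: zIdx c k else zIdx c k := by
  by_cases h : (3 : ℤ) ∣ word c k <;> simp [zIdx, List.range_succ, h]

theorem bIdx_succ (c : ℕ → ℤ) (k : ℕ) :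
    bIdx c (k + 1) = if (3 : ℤ) ∣ word c (12 + k) then k :: bIdx c k else bIdx c k := by
  by_cases h : (3 : ℤ) ∣ word c (12 + k) <;> simp [bIdx, List.range_succ, h]

theorem enum_sound (c : ℕ → ℤ) (pws : List ℕ) (hbal : ∀ k ≤ 12, 2 * nz c k ≤ k)
    (hsign : ∀ k < 12, nz c k = 0 → c k % 3 ≠ 2) (hnz : nz c 12 ≠ 0) : ∀ l k, k + l = 12 →
    enum pws ((List.range' k l).map rowP) k (nz c k) (rr c k) (bitsL c k)
      ((fIdx c k).map rowP) ((zIdx c k).map rowP) = true →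
    leaf pws (rr c 12) (nz c 12) (bitsL c 12) ((fIdx c 12).map rowP) ((zIdx c 12).map rowP) = true
  | 0, k, hk, h => by
      obtain rfl : k = 12 := by omega
      simp only [List.range'_zero, List.map_nil, enum] at h
      cases hc : Nat.beq (nz c 12) 0
      · rwa [hc] at h
      · exact absurd (Nat.eq_of_beq_eq_true hc) hnz
  | l + 1, k, hk, h => by
      have hk12 : k < 12 := by omega
      have ih := enum_sound c pws hbal hsign hnz l (k + 1) (by omega)
      rw [bit_succ, fIdx_succ, zIdx_succ] at ih
      have hn : nz c (k + 1) = nz c k + bit c k := Finset.sum_range_succ _ _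
      have hr : rr c (k + 1) = rr c k + res c k * rowP k := Finset.sum_range_succ _ _
      rw [hn, hr] at ih
      simp only [List.range'_succ, List.map_cons, enum, force_eq, cond_eq_ite,
        Bool.if_false_right, Bool.and_eq_true, decide_eq_true_eq] at h
      obtain ⟨h0, h1⟩ := h
      have hrc := res_cast c k
      by_cases hd : (3 : ℤ) ∣ word c k
      · have hb : bit c k = 0 := if_pos hd
        have hres : res c k = 0 := by omega
        rw [hb, hres, if_pos hd, if_pos hd] at ih
        simp only [add_zero, zero_mul, List.map_cons] at ih
        exact ih h0
      · have hb : bit c k = 1 := if_neg hd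
        rw [hb, if_neg hd, if_neg hd] at ih
        simp only [List.map_cons] at ih
        have hble : Nat.ble (Nat.mul 2 (Nat.succ (nz c k))) (Nat.succ k) = true := by
          rw [Nat.ble_eq]
          have := hbal (k + 1) (by omega)
          rw [hn, hb] at this
          exact this
        rw [if_pos hble, Bool.and_eq_true] at h1
        obtain ⟨h1, h2⟩ := h1
        have hres : res c k = 1 ∨ res c k = 2 := by
          have := res_le c k
          omega
        rcases hres with hres | hres
        · rw [hres, one_mul] at ih
          exact ih (of_decide_eq_true h1)
        · rw [hres] at ih
          have hnz0 : nz c k ≠ 0 := fun h0 => hsign k hk12 h0 (by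
            rw [← word_top c hk12]; omega)
          have : ¬ Nat.beq (nz c k) 0 = true := by rw [Nat.beq_eq]; exact hnz0
          rw [if_neg this] at h2
          exact ih h2

theorem bottom_sound (c : ℕ → ℤ) (K : ℕ → ℕ → List ℕ → List ℕ → Bool)
    (hbal : ∀ k ≤ 24, 23 * nz c k ≤ 12 * k) : ∀ l j, j + l = 12 →
    bottom (rr c 12) K ((List.range' j l).map (bigB ^ ·)) (12 + j) (nz c (12 + j)) (mm c j)
      ((bIdx c j).map (bigB ^ ·)) (bitsL c (12 + j)) = true →
    K (nz c 24) (mm c 12) ((bIdx c 12).map (bigB ^ ·)) (bitsL c 24) = true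
  | 0, j, hj, h => by
      obtain rfl : j = 12 := by omega
      simpa [bottom] using h
  | l + 1, j, hj, h => by
      have ih := bottom_sound c K hbal l (j + 1) (by omega)
      rw [← add_assoc, bit_succ, bIdx_succ] at ih
      have hn : nz c (12 + j + 1) = nz c (12 + j) + bit c (12 + j) := Finset.sum_range_succ _ _
      have hm : mm c (j + 1) = mm c j + xx c j / 3 * bigB ^ j := Finset.sum_range_succ _ _
      have hx : Nat.mod (Nat.div (rr c 12) (bigB ^ j)) 43046721 = xx c j := by
        have h1 := (rr_rep c).dg (N := 43046721) (by norm_num [bigB])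
          (pow_dvd_pow 3 (by norm_num : 16 ≤ 60)) (by omega : j < 12)
        rw [Nat.mod_eq_of_lt (lt_of_le_of_lt ((rr_rep c).1 j (by omega)) (by norm_num))] at h1
        exact h1
      rw [hn, hm] at ih
      simp only [List.range'_succ, List.map_cons, bottom, force_eq, hx] at h
      by_cases hd : (3 : ℤ) ∣ word c (12 + j)
      · have hb : bit c (12 + j) = 0 := if_pos hd
        rw [show Nat.beq (Nat.mod (xx c j) 3) 0 = true from
          (Nat.beq_eq ..).mpr ((word_bot_dvd c j).1 hd)] at h
        rw [hb, if_pos hd] at ih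
        exact ih h
      · have hb : bit c (12 + j) = 1 := if_neg hd
        rw [show Nat.beq (Nat.mod (xx c j) 3) 0 = false from by
          rw [← Bool.not_eq_true, Nat.beq_eq]
          exact fun h0 => hd ((word_bot_dvd c j).2 h0)] at h
        rw [hb, if_neg hd] at ih
        have hble : Nat.ble (Nat.mul 23 (Nat.succ (nz c (12 + j))))
            (Nat.mul 12 (Nat.succ (12 + j))) = true := by
          rw [Nat.ble_eq]
          have := hbal (12 + j + 1) (by omega)
          rw [hn, hb] at this
          exact this
        rw [hble] at h
        exact ih h

theorem extras_sound (m : ℕ) (zb : List ℕ) (q : ℕ → Bool) : ∀ (Z : List ℕ) (k : ℕ)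
    (gs : List ℕ), extras m zb (Z.map rowP) k gs = true → (Z.filter q).length ≤ k →
    dfs m ((Z.filter q).reverse.map rowP ++ gs) zb (k - (Z.filter q).length) m
      ((Z.filter q).reverse.map rowP ++ gs) [] = true
  | [], k, gs, h, _ => by simpa [extras] using h
  | z :: Z, k, gs, h, hk => by
      simp only [List.map_cons, extras, cond_eq_ite, Bool.if_false_right, Bool.and_eq_true,
        decide_eq_true_eq] at h
      obtain ⟨h1, h2⟩ := h
      by_cases hz : q z = true
      · rw [List.filter_cons_of_pos hz] at hk ⊢
        rw [List.length_cons] at hk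
        have hk0 : ¬ Nat.beq k 0 = true := by rw [Nat.beq_eq]; omega
        rw [if_neg hk0] at h1
        have := extras_sound m zb q Z (Nat.pred k) (rowP z :: gs) h1
          (by rw [Nat.pred_eq_sub_one]; omega)
        rw [show k - (z :: Z.filter q).length = Nat.pred k - (Z.filter q).length by
          rw [List.length_cons, Nat.pred_eq_sub_one]; omega]
        simpa using this
      · rw [List.filter_cons_of_neg hz] at hk ⊢
        exact extras_sound m zb q Z k gs h2 hk

theorem dfs_sound (m0 : ℕ) (gs0 : List ℕ) (e : ℕ → ℤ) : ∀ (J : List ℕ) (b k m : ℕ)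
    (gs S : List ℕ), dfs m0 gs0 (J.map (bigB ^ ·)) k m gs (S.map (bigB ^ ·)) = true →
    b * 82 ^ J.length < bigB → (∀ j ∈ J, j < 12) → Coset 9 b m gs e →
    (J.filter fun j => ¬ (9 : ℤ) ∣ e j).length ≤ k →
    (J.filter fun j => ¬ (9 : ℤ) ∣ e j).length = k ∧
      leafCheck m0 gs0 (((J.filter fun j => (9 : ℤ) ∣ e j).reverse ++ S).map (bigB ^ ·)) = true
  | [], b, k, m, gs, S, h, _, _, _, _ => by
      simp only [List.map_nil, dfs] at h
      cases hk : Nat.beq k 0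
      · rw [hk] at h
        exact absurd h (by simp)
      · rw [hk] at h
        refine ⟨by simpa using (Nat.eq_of_beq_eq_true hk).symm, by simpa using h⟩
  | j :: J, b, k, m, gs, S, h, hb, hJ, hc, hk => by
      simp only [List.map_cons, dfs, cond_eq_ite, Bool.if_false_right, Bool.and_eq_true,
        decide_eq_true_eq] at h
      obtain ⟨h1, h2⟩ := h
      have hb82 : b * 82 * 82 ^ J.length < bigB := by
        rw [List.length_cons, pow_succ] at hb
        calc b * 82 * 82 ^ J.length = b * (82 ^ J.length * 82) := by ring
          _ < bigB := hb
      have hb' : b * 82 ^ J.length < bigB :=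
        lt_of_le_of_lt (Nat.mul_le_mul_right _ (by omega)) hb82
      have hb1 : b < bigB :=
        lt_of_le_of_lt (Nat.le_mul_of_pos_right _ (by positivity)) hb'
      have hJ' : ∀ i ∈ J, i < 12 := fun i hi => hJ i (by simp [hi])
      by_cases hj : (9 : ℤ) ∣ e j
      · rw [List.filter_cons_of_neg (by simpa using hj)] at hk ⊢
        rw [List.filter_cons_of_pos (by simpa using hj)]
        obtain ⟨m', gs', h', hE⟩ := impose_sound (E := {e}) (Or.inr (Or.inl rfl)) hb1
          (hJ j (by simp)) (Set.singleton_nonempty e) h2 (by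
            rintro _ rfl
            exact ⟨hc, hj⟩)
        have := dfs_sound m0 gs0 e J (b * 82) k m' gs' (j :: S) h' hb82 hJ' (hE e rfl) hk
        simpa using this
      · rw [List.filter_cons_of_pos (by simpa using hj)] at hk ⊢
        rw [List.filter_cons_of_neg (by simpa using hj)]
        rw [List.length_cons] at hk ⊢
        have hk0 : ¬ Nat.beq k 0 = true := by rw [Nat.beq_eq]; omega
        rw [if_neg hk0] at h1
        have := dfs_sound m0 gs0 e J b (Nat.pred k) m gs S h1 hb' hJ' hc
          (by rw [Nat.pred_eq_sub_one]; omega)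
        refine ⟨?_, this.2⟩
        rw [this.1, Nat.pred_eq_sub_one]
        omega

theorem sp_rows {N b : ℕ} (hb : 728 ≤ b) (t : ℕ → ℤ) : ∀ (L : List ℕ) (w : ℕ → ℤ),
    (∀ i ∈ L, i < 12) → (∀ j < 12, (N : ℤ) ∣ w j - (L.map fun i => t i * mA i j).sum) →
    Sp N b (L.map rowP) w
  | [], w, _, h => fun i hi => by simpa using h i hi
  | l :: L, w, hL, h => by
      refine ⟨mA l, t l, (rowP_rep (hL l (by simp))).mono hb, sp_rows hb t L _
        (fun i hi => hL i (by simp [hi])) fun j hj => ?_⟩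
      have := h j hj
      rw [List.map_cons, List.sum_cons] at this
      rwa [sub_sub]

theorem coset_rows {N b m : ℕ} (hb : 728 ≤ b) {v : ℕ → ℕ} (hm : Rep b m v) (t : ℕ → ℤ)
    (L : List ℕ) (hL : ∀ i ∈ L, i < 12) (hnd : L.Nodup) (ht : ∀ i < 12, i ∉ L → (N : ℤ) ∣ t i)
    (e : ℕ → ℤ) (he : ∀ j < 12, e j = v j + ∑ i ∈ Finset.range 12, t i * mA i j) :
    Coset N b m (L.map rowP) e := by
  refine ⟨v, hm, sp_rows hb t L _ hL fun j hj => ?_⟩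
  rw [he j hj, ← List.sum_toFinset _ hnd, add_sub_cancel_left]
  have hsub : L.toFinset ⊆ Finset.range 12 := fun i hi =>
    Finset.mem_range.2 (hL i (List.mem_toFinset.1 hi))
  rw [← Finset.sum_sdiff hsub, add_sub_cancel_right]
  refine Finset.dvd_sum fun i hi => ?_
  rw [Finset.mem_sdiff, Finset.mem_range, List.mem_toFinset] at hi
  exact (ht i hi.1 hi.2).mul_right _


theorem ballot_true (c : ℕ → ℤ) (hbal : ∀ k ≤ 23, 23 * nz c k ≤ nz c 23 * k) : ∀ l s,
    s + l = 23 → ballot (nz c 23) ((List.range' s l).map (bit c)) (nz c s) s = true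
  | 0, s, _ => by simp [ballot]
  | l + 1, s, h => by
      have ih := ballot_true c hbal l (s + 1) (by omega)
      have hn : nz c (s + 1) = nz c s + bit c s := Finset.sum_range_succ _ _
      have hb := hbal (s + 1) (by omega)
      rw [hn] at ih hb
      simp only [List.range'_succ, List.map_cons, ballot, force_eq]
      rw [show Nat.ble (Nat.mul 23 (Nat.add (nz c s) (bit c s)))
        (Nat.mul (nz c 23) (Nat.succ s)) = true from by rw [Nat.ble_eq]; exact hb]
      exact ih

theorem dot_eq (K : ℕ → Bool) : ∀ (xs ys : List ℕ) (a : ℕ), dot xs ys a K =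
    K (a + ∑ i ∈ Finset.range xs.length, xs.getD i 0 * ys.getD i 0)
  | x :: xs, y :: ys, a => by
      rw [dot, force_eq, dot_eq K xs ys, List.length_cons, Finset.sum_range_succ']
      simp only [List.getD_cons_succ, List.getD_cons_zero]
      congr 1
      change a + x * y + _ = _
      ring
  | [], _, a => by simp [dot]
  | _ :: _, [], a => by simp [dot]

/-- The cyclic autocorrelation at the shift `d` of the support modulo `3`. -/
def corr (c : ℕ → ℤ) (d : ℕ) : ℕ := ∑ i ∈ Finset.range 23, bit c i * bit c ((i + d) % 23)

theorem dot_corr (c : ℕ → ℤ) (K : ℕ → Bool) (d : ℕ) (hd : d < 23) :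
    dot ((List.range 23).map (bit c))
      (((List.range 23).map (bit c) ++ (List.range 23).map (bit c)).drop d) 0 K =
    K (corr c d) := by
  rw [dot_eq, zero_add, corr, List.length_map, List.length_range]
  refine congrArg K (Finset.sum_congr rfl fun i hi => ?_)
  rw [Finset.mem_range] at hi
  refine congrArg₂ (· * ·) ?_ ?_
  · simp [List.getD, hi]
  · by_cases h : i + d < 23
    · rw [Nat.mod_eq_of_lt h]
      simp [List.getD, List.getElem?_append, add_comm d i, h]
    · rw [show (i + d) % 23 = i + d - 23 by omega]
      have h' : i + d - 23 < 23 := by omega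
      simp [List.getD, List.getElem?_append, add_comm d i, h, h']

theorem corrMax_true (c : ℕ → ℤ) (a : ℕ) : ∀ ds : List ℕ, (∀ d ∈ ds, d < 23 ∧ corr c d ≤ a) →
    corrMax ((List.range 23).map (bit c)) a ds = true
  | [], _ => rfl
  | d :: ds, h => by
      rw [corrMax, dot_corr c _ d (h d (by simp)).1,
        show Nat.ble (corr c d) a = true from by rw [Nat.ble_eq]; exact (h d (by simp)).2]
      exact corrMax_true c a ds fun x hx => h x (by simp [hx])

theorem length_filter_range (n : ℕ) (q : ℕ → Prop) [DecidablePred q] :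
    ((List.range n).filter fun i => decide (q i)).length =
      ∑ i ∈ Finset.range n, if q i then 1 else 0 := by
  induction n with
  | zero => simp
  | succ n ih =>
    rw [List.range_succ, List.filter_append, List.length_append, ih, Finset.sum_range_succ]
    congr 1
    by_cases h : q n <;> simp [h]

/-- A codeword whose bottom part vanishes modulo `3` vanishes modulo `3`, because `A Aᵀ ≡ -1`. -/
theorem top_of_bot (c : ℕ → ℤ) (h : ∀ j < 12, (3 : ℤ) ∣ word c (12 + j)) :
    ∀ i < 24, (3 : ℤ) ∣ word c i := by
  have htop : ∀ k < 12, (3 : ℤ) ∣ c k := by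
    intro k hk
    have h1 : (3 : ℤ) ∣ ∑ j ∈ Finset.range 12, word c (12 + j) * mA k j :=
      Finset.dvd_sum fun j hj => (h j (Finset.mem_range.1 hj)).mul_right _
    have h2 : ∑ j ∈ Finset.range 12, word c (12 + j) * mA k j =
        ∑ i ∈ Finset.range 12, c i * ∑ j ∈ Finset.range 12, ((mA i j * mA k j : ℕ) : ℤ) := by
      simp only [word_bot, Finset.sum_mul, Finset.mul_sum]
      rw [Finset.sum_comm]
      refine Finset.sum_congr rfl fun i _ => Finset.sum_congr rfl fun j _ => ?_
      push_cast
      ring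
    have h3 : (3 : ℤ) ∣ ∑ i ∈ Finset.range 12, c i *
        ((∑ j ∈ Finset.range 12, ((mA i j * mA k j : ℕ) : ℤ)) + if i = k then 1 else 0) := by
      refine Finset.dvd_sum fun i hi => Dvd.dvd.mul_left ?_ _
      have := Nat.dvd_of_mod_eq_zero (mA_gram i (Finset.mem_range.1 hi) k hk)
      have := Int.natCast_dvd_natCast.2 this
      push_cast at this ⊢
      exact this
    simp only [mul_add, Finset.sum_add_distrib] at h3
    rw [← h2] at h3
    have h4 := (Int.dvd_add_right h1).1 h3
    simpa [hk] using h4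
  intro i hi
  by_cases h12 : i < 12
  · rw [word_top c h12]
    exact htop i h12
  · obtain ⟨j, rfl⟩ : ∃ j, i = 12 + j := ⟨i - 12, by omega⟩
    exact h j (by omega)

theorem word_lin (c d : ℕ → ℤ) (a : ℤ) (i : ℕ) :
    word (fun k => d k - a * c k) i = word d i - a * word c i := by
  unfold word
  split_ifs
  · rfl
  · rw [Finset.mul_sum, ← Finset.sum_sub_distrib]
    exact Finset.sum_congr rfl fun k _ => by ring

/-- If at most one generator is left, all vectors of the coset that contains `0` are proportional
modulo `3`. -/
theorem coset_line {b m : ℕ} {gs : List ℕ} (hb : b < bigB) (hgs : gs.length ≤ 1) {c d : ℕ → ℤ}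
    (h0 : Coset 3 b m gs (fun _ => 0)) (hc : Coset 3 b m gs c) (hd : Coset 3 b m gs d)
    (hne : ∃ i < 12, ¬ (3 : ℤ) ∣ c i) : ∃ l : ℤ, ∀ i < 12, (3 : ℤ) ∣ d i - l * c i := by
  have hd3 : (3 : ℕ) ∣ bigB := Good.dvd (Or.inl rfl)
  have huniq : ∀ {r : ℕ} {v v' : ℕ → ℕ}, Rep b r v → Rep b r v' → ∀ i < 12,
      (3 : ℤ) ∣ (v' i : ℤ) - v i := fun {r v v'} hv hv' i hi => by
    have := (hv.dg hb hd3 hi).symm.trans (hv'.dg hb hd3 hi)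
    omega
  obtain ⟨v0, hv0, h0⟩ := h0
  obtain ⟨v1, hv1, h1⟩ := hc
  obtain ⟨v2, hv2, h2⟩ := hd
  rcases gs with _ | ⟨g, _ | ⟨g', gs⟩⟩
  · obtain ⟨i, hi, hne⟩ := hne
    refine absurd ?_ hne
    have a1 : (3 : ℤ) ∣ 0 - v0 i := h0 i hi
    have a2 : (3 : ℤ) ∣ c i - v1 i := h1 i hi
    have a3 := huniq hv0 hv1 i hi
    omega
  · obtain ⟨g0, a0, hg0, h0⟩ := h0
    obtain ⟨g1, a1, hg1, h1⟩ := h1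
    obtain ⟨g2, a2, hg2, h2⟩ := h2
    have hc : ∀ i < 12, (3 : ℤ) ∣ c i - (a1 - a0) * g0 i := fun i hi => by
      have := dvd_add (dvd_add (dvd_sub (h1 i hi) (h0 i hi)) (huniq hv0 hv1 i hi))
        ((huniq hg0 hg1 i hi).mul_left a1)
      push_cast at this
      ring_nf at this ⊢
      exact this
    have hd : ∀ i < 12, (3 : ℤ) ∣ d i - (a2 - a0) * g0 i := fun i hi => by
      have := dvd_add (dvd_add (dvd_sub (h2 i hi) (h0 i hi)) (huniq hv0 hv2 i hi))
        ((huniq hg0 hg2 i hi).mul_left a2)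
      push_cast at this
      ring_nf at this ⊢
      exact this
    have hu : ¬ (3 : ℤ) ∣ a1 - a0 := fun h => by
      obtain ⟨i, hi, hne⟩ := hne
      have := dvd_add (hc i hi) (h.mul_right (g0 i : ℤ))
      rw [sub_add_cancel] at this
      exact hne this
    have hsq : (3 : ℤ) ∣ (a1 - a0) * (a1 - a0) - 1 := by
      generalize a1 - a0 = x at hu
      have : x % 3 = 1 ∨ x % 3 = 2 := by omega
      have h3 := Int.emod_add_mul_ediv x 3
      generalize x / 3 = q at h3
      rcases this with h | h <;> rw [h] at h3 <;> rw [← h3]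
      · exact ⟨2 * q + 3 * q * q, by ring⟩
      · exact ⟨1 + 4 * q + 3 * q * q, by ring⟩
    refine ⟨(a2 - a0) * (a1 - a0), fun i hi => ?_⟩
    have := dvd_sub (dvd_sub (hd i hi) ((hc i hi).mul_left ((a2 - a0) * (a1 - a0))))
      (hsq.mul_left ((a2 - a0) * g0 i))
    ring_nf at this ⊢
    exact this
  · simp at hgs

theorem search_sound (hall : checkAll = true) (c : ℕ → ℤ)
    (hbal : ∀ k ≤ 23, 23 * nz c k ≤ nz c 23 * k)
    (hsign : ∀ k < 12, nz c k = 0 → c k % 3 ≠ 2)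
    (hcanon : ∀ d ∈ [2, 3, 4, 6, 8, 9, 12, 13, 16, 18], corr c d ≤ corr c 1)
    (hunit : ∃ i < 24, ¬ (3 : ℤ) ∣ word c i)
    (h12 : (∑ i ∈ Finset.range 24, if (27 : ℤ) ∣ word c i then 0 else 1) ≤ 12) :
    (∑ i ∈ Finset.range 24, if (27 : ℤ) ∣ word c i then 0 else 1) = 12 ∧
    (¬ ∀ i < 24, (27 : ℤ) ∣ word c i → (243 : ℤ) ∣ word c i) ∧
    ∀ d : ℕ → ℤ, (∀ i < 24, (27 : ℤ) ∣ word c i → (3 : ℤ) ∣ word d i) →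
      ∃ l : ℤ, ∀ i < 24, (3 : ℤ) ∣ word d i - l * word c i := by
  have hbot : ∃ j < 12, ¬ (3 : ℤ) ∣ word c (12 + j) := by
    by_contra! h
    obtain ⟨i, hi, hne⟩ := hunit
    exact hne (top_of_bot c h i hi)
  have hsplit : ∀ f : ℕ → ℕ, ∑ i ∈ Finset.range 24, f i =
      ∑ i ∈ Finset.range 12, f i + ∑ j ∈ Finset.range 12, f (12 + j) := fun f =>
    Finset.sum_range_add f 12 12
  -- the number of coordinates not divisible by 27, sorted by position and valuation
  have hcount : (∑ i ∈ Finset.range 24, if (27 : ℤ) ∣ word c i then 0 else 1) = nz c 24 +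
      ((zIdx c 12).filter fun i => ¬ (27 : ℤ) ∣ word c i).length +
      ((bIdx c 12).filter fun j => ¬ (9 : ℤ) ∣ ee c j).length := by
    rw [zIdx, bIdx, List.filter_reverse, List.filter_reverse, List.length_reverse,
      List.length_reverse, List.filter_filter, List.filter_filter, nz, hsplit, hsplit]
    simp only [← Bool.decide_and]
    rw [length_filter_range, length_filter_range]
    have e1 : (∑ i ∈ Finset.range 12, if (27 : ℤ) ∣ word c i then 0 else 1) =
        ∑ i ∈ Finset.range 12, bit c i + ∑ i ∈ Finset.range 12,
          if ¬ (27 : ℤ) ∣ word c i ∧ (3 : ℤ) ∣ word c i then 1 else 0 := by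
      rw [← Finset.sum_add_distrib]
      refine Finset.sum_congr rfl fun i _ => ?_
      unfold bit
      split_ifs <;> first | rfl | omega
    have e2 : (∑ j ∈ Finset.range 12, if (27 : ℤ) ∣ word c (12 + j) then 0 else 1) =
        ∑ j ∈ Finset.range 12, bit c (12 + j) + ∑ j ∈ Finset.range 12,
          if ¬ (9 : ℤ) ∣ ee c j ∧ (3 : ℤ) ∣ word c (12 + j) then 1 else 0 := by
      rw [← Finset.sum_add_distrib]
      refine Finset.sum_congr rfl fun j _ => ?_
      have := word_bot_ee c j
      unfold bit
      split_ifs <;> first | rfl | omega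
    rw [e1, e2]
    ring
  rw [hcount] at h12
  have hn24 : nz c 24 = nz c 23 + bit c 23 := Finset.sum_range_succ _ _
  have hbal24 : ∀ k ≤ 24, 23 * nz c k ≤ 12 * k := by
    intro k hk
    rcases Nat.lt_or_ge k 24 with h | h
    · have := hbal k (by omega)
      have h1 : nz c 23 * k ≤ 12 * k := Nat.mul_le_mul_right _ (by omega)
      omega
    · obtain rfl : k = 24 := by omega
      omega
  have hnz12 : nz c 12 ≠ 0 := by
    intro h0
    have h1 : ∀ i ∈ Finset.range 12, bit c i = 0 := Finset.sum_eq_zero_iff.1 h0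
    obtain ⟨j, hj, hne⟩ := hbot
    refine hne ?_
    rw [word_bot]
    refine Finset.dvd_sum fun i hi => Dvd.dvd.mul_right ?_ _
    have := h1 i hi
    rw [bit, word_top c (Finset.mem_range.1 hi)] at this
    by_contra hn
    rw [if_neg hn] at this
    exact absurd this (by norm_num)
  rw [checkAll, forceL_eq, forceL_eq] at hall
  have hleaf := enum_sound c ((List.range 12).map (bigB ^ ·)) (fun k hk => by
    have := hbal24 k (by omega)
    omega) hsign hnz12 12 0 rfl hall
  have hrest := bottom_sound c _ hbal24 12 0 rfl hleaf
  have htail : (bitsL c 24).tail.reverse = (List.range 23).map (bit c) := by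
    rw [bit_succ c 23, List.tail_cons, bitsL, List.reverse_reverse]
  have hhead : (bitsL c 24).headD 0 = bit c 23 := by
    rw [bit_succ c 23]; rfl
  have hW : Nat.sub (nz c 24) (bit c 23) = nz c 23 := by
    change nz c 24 - bit c 23 = _
    omega
  have hcan : canon ((List.range 23).map (bit c)) = true := by
    rw [canon, dot_corr c _ 1 (by norm_num)]
    exact corrMax_true c _ _ fun d hd => ⟨by
      simp only [List.mem_cons, List.not_mem_nil, or_false] at hd
      omega, hcanon d hd⟩
  have hball : ballot (nz c 23) ((List.range 23).map (bit c)) 0 0 = true := by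
    have := ballot_true c hbal 23 0 rfl
    rwa [← List.range_eq_range'] at this
  rw [htail, hhead, hW, hball, hcan] at hrest
  replace hrest : extras (mm c 12) ((bIdx c 12).map (bigB ^ ·)) ((zIdx c 12).map rowP)
      (12 - nz c 24) ((fIdx c 12).map rowP) = true := by
    cases hq : Nat.ble (nz c 24) 9 <;> rw [hq] at hrest <;> exact hrest
  have hdfs := extras_sound (mm c 12) _ (fun i => ¬ (27 : ℤ) ∣ word c i) (zIdx c 12) _ _ hrest
    (by omega)
  set L := ((zIdx c 12).filter fun i => ¬ (27 : ℤ) ∣ word c i).reverse ++ fIdx c 12 with hLdef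
  have hLmap : (((zIdx c 12).filter fun i => ¬ (27 : ℤ) ∣ word c i).reverse.map rowP ++
      (fIdx c 12).map rowP) = L.map rowP := by rw [hLdef, List.map_append]
  rw [hLmap] at hdfs
  have hmem : ∀ i, i ∈ L ↔ i < 12 ∧ ¬ (27 : ℤ) ∣ word c i := by
    intro i
    simp only [hLdef, zIdx, fIdx, List.mem_append, List.mem_reverse, List.mem_filter,
      List.mem_range, decide_eq_true_eq]
    constructor
    · rintro (⟨⟨h1, -⟩, h2⟩ | ⟨h1, h2⟩)
      · exact ⟨h1, h2⟩
      · exact ⟨h1, by omega⟩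
    · rintro ⟨h1, h2⟩
      by_cases h3 : (3 : ℤ) ∣ word c i
      · exact Or.inl ⟨⟨h1, h3⟩, h2⟩
      · exact Or.inr ⟨h1, h3⟩
  have hnd : L.Nodup := by
    rw [hLdef]
    refine List.Nodup.append ?_ ?_ ?_
    · rw [List.nodup_reverse]
      exact ((List.nodup_reverse.2 (List.nodup_range.filter _))).filter _
    · exact List.nodup_reverse.2 (List.nodup_range.filter _)
    · intro i h1 h2
      simp only [zIdx, fIdx, List.mem_reverse, List.mem_filter, List.mem_range,
        decide_eq_true_eq] at h1 h2
      exact h2.2 h1.1.2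
  have hL12 : ∀ i ∈ L, i < 12 := fun i hi => ((hmem i).1 hi).1
  have hbI : ∀ j ∈ bIdx c 12, j < 12 ∧ (3 : ℤ) ∣ word c (12 + j) := fun j hj => by
    simpa only [bIdx, List.mem_reverse, List.mem_filter, List.mem_range,
      decide_eq_true_eq] using hj
  have hlen : (bIdx c 12).length ≤ 12 := by
    rw [bIdx, List.length_reverse]
    exact (List.length_filter_le _ _).trans (by simp)
  have hbig : ∀ n ≤ 12, 5824 * 82 ^ n < bigB := fun n hn =>
    lt_of_le_of_lt (Nat.mul_le_mul_left _ (Nat.pow_le_pow_right (by norm_num) hn))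
      (by norm_num [bigB])
  obtain ⟨hk, hchk⟩ := dfs_sound (mm c 12) (L.map rowP) (ee c) (bIdx c 12) 5824 _ _ _ [] hdfs
    (hbig _ hlen) (fun j hj => (hbI j hj).1)
    (coset_rows (by norm_num) (mm_rep c) (fun i => word c i / 3) L hL12 hnd (fun i hi hiL => by
      have : (27 : ℤ) ∣ word c i := by
        by_contra h
        exact hiL ((hmem i).2 ⟨hi, h⟩)
      push_cast
      omega) (ee c) fun j _ => rfl) (by omega)
  rw [List.append_nil] at hchk
  set S := ((bIdx c 12).filter fun j => (9 : ℤ) ∣ ee c j).reverse with hS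
  have hSmem : ∀ j ∈ S, j < 12 ∧ word c (12 + j) = 3 * ee c j ∧ (9 : ℤ) ∣ ee c j := by
    intro j hj
    rw [hS, List.mem_reverse, List.mem_filter] at hj
    have := hbI j hj.1
    exact ⟨this.1, word_bot_ee c j this.2, by simpa using hj.2⟩
  have hSlen : S.length ≤ 12 := by
    rw [hS, List.length_reverse]
    exact (List.length_filter_le _ _).trans hlen
  rw [leafCheck] at hchk
  have hrun81 : run 81 (fun _ => false) (S.map (bigB ^ ·)) (mm c 12) (L.map rowP) = true := by
    by_contra h
    rw [Bool.not_eq_true] at h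
    rw [h] at hchk
    exact absurd hchk (by simp)
  rw [hrun81, cond_true] at hchk
  refine ⟨by rw [hcount]; omega, fun hall243 => ?_, fun d hd => ?_⟩
  · obtain ⟨m', gs', hf, -⟩ := run_sound (E := {ee c}) (Or.inr (Or.inr rfl))
      (Set.singleton_nonempty _) (hbig _ hSlen) (fun j hj => (hSmem j hj).1) hrun81 (by
        rintro _ rfl
        refine ⟨coset_rows (by norm_num) (mm_rep c) (fun i => word c i / 3) L hL12 hnd
          (fun i hi hiL => ?_) (ee c) fun j _ => rfl, fun j hj => ?_⟩
        · have h27 : (27 : ℤ) ∣ word c i := by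
            by_contra h
            exact hiL ((hmem i).2 ⟨hi, h⟩)
          have := hall243 i (by omega) h27
          push_cast
          omega
        · obtain ⟨h1, h2, h3⟩ := hSmem j hj
          have := hall243 (12 + j) (by omega) (by omega)
          push_cast
          omega)
    exact absurd hf (by simp)
  · -- all words that vanish modulo 3 on the zero set of `c` modulo 27
    set E : Set (ℕ → ℤ) := {e | ∃ d : ℕ → ℤ,
      (∀ i < 24, (27 : ℤ) ∣ word c i → (3 : ℤ) ∣ word d i) ∧ ∀ j, e j = word d (12 + j)} with hE
    have hcE : (fun j => word c (12 + j)) ∈ E := ⟨c, fun i _ h => by omega, fun j => rfl⟩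
    have hdE : (fun j => word d (12 + j)) ∈ E := ⟨d, hd, fun j => rfl⟩
    have h0E : (fun _ => 0) ∈ E := ⟨fun _ => 0, fun i _ _ => by simp [word],
      fun j => by simp [word]⟩
    obtain ⟨m', gs', hK, hco⟩ := run_sound (E := E) (b := 5824) (Or.inl rfl) ⟨_, hcE⟩
      (hbig _ hSlen) (fun j hj => (hSmem j hj).1) hchk (by
        rintro e ⟨d, hd, he⟩
        refine ⟨coset_rows (by norm_num) (rep_zero _) d L hL12 hnd (fun i hi hiL => ?_) e
          fun j _ => ?_, fun j hj => ?_⟩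
        · have h27 : (27 : ℤ) ∣ word c i := by
            by_contra h
            exact hiL ((hmem i).2 ⟨hi, h⟩)
          rw [← word_top d hi]
          exact hd i (by omega) h27
        · rw [he j, word_bot]
          simp
        · obtain ⟨h1, h2, h3⟩ := hSmem j hj
          rw [he j]
          exact hd (12 + j) (by omega) (by omega))
    obtain ⟨l, hl⟩ := coset_line (hbig _ hSlen) ((Nat.ble_eq ..).mp hK) (hco _ h0E) (hco _ hcE)
      (hco _ hdE) hbot
    refine ⟨l, fun i hi => ?_⟩
    rw [← word_lin]
    exact top_of_bot _ (fun j hj => by rw [word_lin]; exact hl j hj) i hi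


/-! ### Normal forms under the affine group and signs -/

/-- The integral vector `f` (coordinates `n < 24`) reduces to a codeword modulo `729`. -/
def IsCW (f : ℕ → ℤ) : Prop := ∃ c : ℕ → ℤ, ∀ n < 24, (729 : ℤ) ∣ f n - word c n

/-- The number of coordinates not divisible by `27`. -/
def cnt (f : ℕ → ℤ) : ℕ := ∑ i ∈ Finset.range 24, if (27 : ℤ) ∣ f i then 0 else 1

/-- The property of codewords that the search establishes: if a codeword that is nonzero modulo
`3` has at least `12` coordinates divisible by `27`, then it has exactly `12` of them, these are
not all divisible by `243`, and any codeword that vanishes modulo `3` on these coordinates is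
proportional to the given one modulo `3`. -/
def FactI (f : ℕ → ℤ) : Prop :=
  (∃ i < 24, ¬ (3 : ℤ) ∣ f i) → cnt f ≤ 12 →
    cnt f = 12 ∧ (¬ ∀ i < 24, (27 : ℤ) ∣ f i → (243 : ℤ) ∣ f i) ∧
    ∀ d : ℕ → ℤ, IsCW d → (∀ i < 24, (27 : ℤ) ∣ f i → (3 : ℤ) ∣ d i) →
      ∃ l : ℤ, ∀ i < 24, (3 : ℤ) ∣ d i - l * f i

theorem FactI.congr {f f' : ℕ → ℤ} (h : FactI f) (e : ∀ n < 24, (729 : ℤ) ∣ f' n - f n) :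
    FactI f' := by
  intro hu hc
  have hcnt : cnt f' = cnt f := Finset.sum_congr rfl fun i hi => by
    have := e i (Finset.mem_range.1 hi)
    have h27 : (27 : ℤ) ∣ f' i ↔ (27 : ℤ) ∣ f i := by omega
    simp only [h27]
  obtain ⟨i, hi, hne⟩ := hu
  obtain ⟨h1, h2, h3⟩ := h ⟨i, hi, by have := e i hi; omega⟩ (hcnt.symm.le.trans hc)
  refine ⟨hcnt.trans h1, fun h243 => h2 fun i hi h27 => ?_, fun d hd hz => ?_⟩
  · have a := e i hi
    have b := h243 i hi (by omega)
    omega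
  · obtain ⟨l, hl⟩ := h3 d hd fun i hi h27 => hz i hi (by have := e i hi; omega)
    refine ⟨l, fun i hi => ?_⟩
    have a := ((show (3 : ℤ) ∣ 729 by norm_num).trans (e i hi)).mul_left l
    have b := hl i hi
    rw [show d i - l * f' i = d i - l * f i - l * (f' i - f i) by ring]
    exact dvd_sub b a

theorem FactI.of_neg {f : ℕ → ℤ} (h : FactI fun n => - f n) : FactI f := by
  intro hu hc
  have hcnt : cnt (fun n => - f n) = cnt f := by simp only [cnt, dvd_neg]
  obtain ⟨i, hi, hne⟩ := hu
  obtain ⟨h1, h2, h3⟩ := h ⟨i, hi, by simpa using hne⟩ (hcnt.le.trans hc)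
  refine ⟨hcnt.symm.trans h1, fun h243 => h2 fun i hi h27 => ?_, fun d hd hz => ?_⟩
  · rw [dvd_neg] at h27 ⊢
    exact h243 i hi h27
  · obtain ⟨l, hl⟩ := h3 d hd fun i hi h27 => hz i hi (by simpa using h27)
    exact ⟨-l, fun i hi => by simpa using hl i hi⟩

/-- A permutation of the coordinates that fixes `∞` and preserves the code. -/
structure Aut (π : ℕ → ℕ) : Prop where
  sum : ∀ F : ℕ → ℕ, ∑ i ∈ Finset.range 23, F (π i) = ∑ i ∈ Finset.range 23, F i
  lt : ∀ i < 23, π i < 23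
  fix : π 23 = 23
  code : ∀ f, IsCW f → IsCW fun n => f (π n)

theorem Aut.surj {π : ℕ → ℕ} (h : Aut π) {i : ℕ} (hi : i < 24) : ∃ k < 24, π k = i := by
  rcases Nat.lt_or_ge i 23 with h23 | h23
  · by_contra! hne
    have := h.sum fun n => if n = i then 1 else 0
    rw [Finset.sum_eq_zero fun k hk => if_neg (hne k (by
      have := Finset.mem_range.1 hk; omega))] at this
    rw [Finset.sum_ite_eq' , if_pos (Finset.mem_range.2 h23)] at this
    exact absurd this (by norm_num)
  · exact ⟨23, by norm_num, by rw [h.fix]; omega⟩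

theorem Aut.lt24 {π : ℕ → ℕ} (h : Aut π) {i : ℕ} (hi : i < 24) : π i < 24 := by
  rcases Nat.lt_or_ge i 23 with h23 | h23
  · exact (h.lt i h23).trans (by norm_num)
  · obtain rfl : i = 23 := by omega
    rw [h.fix]
    norm_num

theorem Aut.comp {π ρ : ℕ → ℕ} (h : Aut π) (k : Aut ρ) : Aut fun n => π (ρ n) where
  sum F := (k.sum fun n => F (π n)).trans (h.sum F)
  lt i hi := h.lt _ (k.lt i hi)
  fix := by rw [k.fix, h.fix]
  code f hf := k.code _ (h.code f hf)

theorem FactI.of_aut {π : ℕ → ℕ} (hπ : Aut π) {f : ℕ → ℤ} (h : FactI fun n => f (π n)) :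
    FactI f := by
  intro hu hc
  have hcnt : cnt (fun n => f (π n)) = cnt f := by
    rw [cnt, cnt, Finset.sum_range_succ, Finset.sum_range_succ _ 23, hπ.fix]
    exact congrArg₂ (· + ·) (hπ.sum fun i => if (27 : ℤ) ∣ f i then 0 else 1) rfl
  obtain ⟨i, hi, hne⟩ := hu
  obtain ⟨k, hk, rfl⟩ := hπ.surj hi
  obtain ⟨h1, h2, h3⟩ := h ⟨k, hk, hne⟩ (hcnt.le.trans hc)
  refine ⟨hcnt.symm.trans h1, fun h243 => h2 fun i hi h27 => h243 _ (hπ.lt24 hi) h27, fun d hd hz => ?_⟩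
  obtain ⟨l, hl⟩ := h3 _ (hπ.code d hd) fun i hi h27 => hz _ (hπ.lt24 hi) h27
  refine ⟨l, fun i hi => ?_⟩
  obtain ⟨k, hk, rfl⟩ := hπ.surj hi
  exact hl k hk

/-- The rows of the generator matrix `[I | A]`. -/
def rowG (i n : ℕ) : ℕ := if n < 12 then (if n = i then 1 else 0) else mA i (n - 12)

theorem word_rowG (c : ℕ → ℤ) (n : ℕ) :
    word c n = ∑ i ∈ Finset.range 12, c i * rowG i n := by
  unfold word rowG
  split_ifs with h
  · simp [h]
  · rfl

/-- It suffices to check that the permuted rows of `[I | A]` are codewords. -/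
theorem isCW_perm (π : ℕ → ℕ) (hlt : ∀ i < 24, π i < 24)
    (h : ∀ i < 12, ∀ j < 12,
      (728 * rowG i (π (12 + j)) + ∑ k ∈ Finset.range 12, rowG i (π k) * mA k j) % 729 = 0)
    (f : ℕ → ℤ) (hf : IsCW f) : IsCW fun n => f (π n) := by
  obtain ⟨c, hc⟩ := hf
  refine ⟨fun n => word c (π n), fun n hn => ?_⟩
  rw [show f (π n) - word (fun n => word c (π n)) n =
    (f (π n) - word c (π n)) + (word c (π n) - word (fun n => word c (π n)) n) by ring]
  refine dvd_add (hc _ (hlt n hn)) ?_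
  rcases Nat.lt_or_ge n 12 with h12 | h12
  · rw [word_top _ h12]
    simp
  · obtain ⟨j, rfl⟩ : ∃ j, n = 12 + j := ⟨n - 12, by omega⟩
    have hj : j < 12 := by omega
    have e : word (fun n => word c (π n)) (12 + j) = ∑ i ∈ Finset.range 12,
        c i * ∑ k ∈ Finset.range 12, ((rowG i (π k) * mA k j : ℕ) : ℤ) := by
      rw [word_bot]
      simp only [word_rowG c, Finset.sum_mul, Finset.mul_sum]
      rw [Finset.sum_comm]
      refine Finset.sum_congr rfl fun i _ => Finset.sum_congr rfl fun k _ => ?_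
      push_cast
      ring
    rw [e, word_rowG c, ← Finset.sum_sub_distrib]
    refine Finset.dvd_sum fun i hi => ?_
    rw [← mul_sub]
    refine Dvd.dvd.mul_left ?_ _
    have := Int.natCast_dvd_natCast.2 (Nat.dvd_of_mod_eq_zero (h i (Finset.mem_range.1 hi) j hj))
    push_cast at this ⊢
    generalize (∑ k ∈ Finset.range 12, (rowG i (π k) : ℤ) * (mA k j : ℤ)) = s at this ⊢
    omega

/-- The cyclic shift. -/
def shiftP (n : ℕ) : ℕ := if n < 23 then (n + 1) % 23 else n

/-- The multiplier `2`. -/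
def multP (n : ℕ) : ℕ := if n < 23 then (2 * n) % 23 else n

theorem aut_shiftP : Aut shiftP where
  sum F := by
    simp only [shiftP, Finset.sum_range_succ, Finset.sum_range_zero]
    norm_num
    ring
  lt := by decide
  fix := rfl
  code := isCW_perm _ (by decide) (by decide +kernel)

theorem aut_multP : Aut multP where
  sum F := by
    simp only [multP, Finset.sum_range_succ, Finset.sum_range_zero]
    norm_num
    ring
  lt := by decide
  fix := rfl
  code := isCW_perm _ (by decide) (by decide +kernel)

/-- The affine map `n ↦ 2 ^ a * n + b` modulo `23`. -/
def affP (a b n : ℕ) : ℕ := if n < 23 then (2 ^ a * n + b) % 23 else n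

theorem aut_affP (a b : ℕ) : Aut (affP a b) := by
  induction b with
  | zero =>
    induction a with
    | zero =>
      have : affP 0 0 = fun n => n := by
        funext n
        unfold affP
        split_ifs with h
        · simp [Nat.mod_eq_of_lt h]
        · rfl
      rw [this]
      exact ⟨fun F => rfl, fun i hi => hi, rfl, fun f hf => hf⟩
    | succ a ih =>
      have : affP (a + 1) 0 = fun n => affP a 0 (multP n) := by
        funext n
        unfold affP multP
        by_cases h : n < 23
        · have h2 : 2 * n % 23 < 23 := Nat.mod_lt _ (by norm_num)
          rw [if_pos h, if_pos h, if_pos h2, add_zero, add_zero, Nat.mul_mod (2 ^ a) (2 * n % 23),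
            Nat.mod_mod, ← Nat.mul_mod, pow_succ]
          congr 1
          ring
        · rw [if_neg h, if_neg h, if_neg h]
      rw [this]
      exact ih.comp aut_multP
  | succ b ih =>
    have : affP a (b + 1) = fun n => shiftP (affP a b n) := by
      funext n
      unfold affP shiftP
      by_cases h : n < 23
      · have h2 : (2 ^ a * n + b) % 23 < 23 := Nat.mod_lt _ (by norm_num)
        rw [if_pos h, if_pos h, if_pos h2, Nat.mod_add_mod, add_assoc]
      · rw [if_neg h, if_neg h, if_neg h]
    rw [this]
    exact aut_shiftP.comp ih

/-- The cycle lemma: a cyclic rotation of a `0`-`1` sequence of length `N` has all prefix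
densities at most the overall density. -/
theorem cycle_lemma (N : ℕ) (hN : 0 < N) (g : ℕ → ℕ) (hg : ∀ n, g (n + N) = g n) :
    ∃ b, ∀ k, N * ∑ n ∈ Finset.range k, g (b + n) ≤ (∑ n ∈ Finset.range N, g n) * k := by
  set W := ∑ n ∈ Finset.range N, g n with hW
  set h : ℕ → ℤ := fun n => N * ∑ i ∈ Finset.range n, (g i : ℤ) - W * n with hh
  have hwin : ∀ n, ∑ i ∈ Finset.range N, g (n + i) = W := by
    intro n
    induction n with
    | zero => simp [hW]
    | succ n ih =>
      have e := (Finset.sum_range_succ (fun i => g (n + i)) N).symm.trans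
        (Finset.sum_range_succ' (fun i => g (n + i)) N)
      rw [hg, ih, add_zero] at e
      rw [Finset.sum_congr rfl fun i _ => congrArg g (show n + 1 + i = n + (i + 1) by ring)]
      exact (Nat.add_right_cancel e).symm
  have hper : ∀ n, h (n + N) = h n := by
    intro n
    simp only [hh, Finset.sum_range_add]
    have := hwin n
    have hz : (∑ i ∈ Finset.range N, (g (n + i) : ℤ)) = W := by exact_mod_cast this
    rw [hz]
    push_cast
    ring
  obtain ⟨b, -, hb⟩ := Finset.exists_max_image (Finset.range N) h ⟨0, Finset.mem_range.2 hN⟩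
  have hmax : ∀ n, h n ≤ h b := by
    intro n
    induction n using Nat.strong_induction_on with
    | _ n ih =>
      rcases Nat.lt_or_ge n N with h1 | h1
      · exact hb n (Finset.mem_range.2 h1)
      · obtain ⟨k, rfl⟩ : ∃ k, n = k + N := ⟨n - N, by omega⟩
        rw [hper]
        exact ih k (by omega)
  refine ⟨b, fun k => ?_⟩
  have := hmax (b + k)
  simp only [hh, Finset.sum_range_add] at this
  push_cast at this
  zify
  linarith

/-- Support bit modulo `3`. -/
def bt (f : ℕ → ℤ) (n : ℕ) : ℕ := if (3 : ℤ) ∣ f n then 0 else 1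

/-- Cyclic autocorrelation of the support modulo `3`. -/
def cor (f : ℕ → ℤ) (d : ℕ) : ℕ := ∑ i ∈ Finset.range 23, bt f i * bt f ((i + d) % 23)

theorem cor_affP (f : ℕ → ℤ) (a b d : ℕ) :
    cor (fun n => f (affP a b n)) d = cor f ((2 ^ a * d) % 23) := by
  unfold cor
  rw [← (aut_affP a b).sum fun i => bt f i * bt f ((i + 2 ^ a * d % 23) % 23)]
  refine Finset.sum_congr rfl fun i hi => ?_
  rw [Finset.mem_range] at hi
  have h2 : (i + d) % 23 < 23 := Nat.mod_lt _ (by norm_num)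
  have e : affP a b ((i + d) % 23) = (affP a b i + 2 ^ a * d % 23) % 23 := by
    unfold affP
    rw [if_pos h2, if_pos hi, ← Nat.add_mod, Nat.add_mod (2 ^ a * ((i + d) % 23)),
      Nat.mul_mod (2 ^ a) ((i + d) % 23), Nat.mod_mod, ← Nat.mul_mod, ← Nat.add_mod]
    congr 1
    ring
  rw [← e]
  rfl

/-- Every codeword satisfies `FactI`, given the outcome of the search. -/
theorem factI_of_isCW (hall : checkAll = true) (f : ℕ → ℤ) (hf : IsCW f) : FactI f := by
  -- choice of the multiplier
  obtain ⟨a, -, ha⟩ := Finset.exists_max_image (Finset.range 11) (fun a => cor f (2 ^ a % 23))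
    ⟨0, by simp⟩
  have hmax : ∀ n, cor f (2 ^ n % 23) ≤ cor f (2 ^ a % 23) := fun n => by
    have h1 : 2 ^ n % 23 = 2 ^ (n % 11) % 23 := by
      conv_lhs => rw [← Nat.div_add_mod n 11, pow_add, pow_mul, Nat.mul_mod, Nat.pow_mod]
      norm_num
    rw [h1]
    exact ha _ (Finset.mem_range.2 (Nat.mod_lt _ (by norm_num)))
  -- choice of the rotation
  obtain ⟨b, hb⟩ := cycle_lemma 23 (by norm_num) (fun n => bt f ((2 ^ a * n) % 23)) fun n => by
    simp only [mul_add, Nat.add_mul_mod_self_right]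
  set b' := 2 ^ a * b with hb'
  refine FactI.of_aut (aut_affP a b') ?_
  set f' : ℕ → ℤ := fun n => f (affP a b' n) with hf'
  have hcw' : IsCW f' := (aut_affP a b').code f hf
  have hbt' : ∀ n < 23, bt f' n = bt f ((2 ^ a * (b + n)) % 23) := fun n hn => by
    rw [bt, hf']
    simp only [affP, if_pos hn]
    rw [bt, show 2 ^ a * n + b' = 2 ^ a * (b + n) by rw [hb']; ring]
  have hW : ∑ n ∈ Finset.range 23, bt f ((2 ^ a * n) % 23) = ∑ n ∈ Finset.range 23, bt f' n := by
    rw [show ∑ n ∈ Finset.range 23, bt f' n = ∑ n ∈ Finset.range 23, bt f n from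
      (aut_affP a b').sum (bt f), ← (aut_affP a 0).sum (bt f)]
    refine Finset.sum_congr rfl fun i hi => ?_
    rw [affP, if_pos (Finset.mem_range.1 hi), add_zero]
  have hbal' : ∀ k ≤ 23, 23 * ∑ n ∈ Finset.range k, bt f' n ≤
      (∑ n ∈ Finset.range 23, bt f' n) * k := fun k hk => by
    rw [← hW, Finset.sum_congr rfl fun n hn => hbt' n (by
      have := Finset.mem_range.1 hn; omega)]
    exact hb k
  have hcan' : ∀ d ∈ [2, 3, 4, 6, 8, 9, 12, 13, 16, 18], cor f' d ≤ cor f' 1 := by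
    intro d hd
    have hpow : ∃ e, d = 2 ^ e % 23 := by
      simp only [List.mem_cons, List.not_mem_nil, or_false] at hd
      rcases hd with rfl | rfl | rfl | rfl | rfl | rfl | rfl | rfl | rfl | rfl
      exacts [⟨1, rfl⟩, ⟨8, rfl⟩, ⟨2, rfl⟩, ⟨9, rfl⟩, ⟨3, rfl⟩, ⟨5, rfl⟩, ⟨10, rfl⟩, ⟨7, rfl⟩,
        ⟨4, rfl⟩, ⟨6, rfl⟩]
    obtain ⟨e, rfl⟩ := hpow
    rw [hf', cor_affP, cor_affP, mul_one, Nat.mul_mod, Nat.mod_mod, ← Nat.mul_mod, ← pow_add]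
    exact hmax _
  -- passage to an integral word with the right sign
  obtain ⟨c, hc⟩ := hcw'
  refine FactI.congr ?_ hc
  have hbit : ∀ n < 24, bit c n = bt f' n := fun n hn => by
    have := hc n hn
    have h3 : (3 : ℤ) ∣ word c n ↔ (3 : ℤ) ∣ f' n := by omega
    simp only [bit, bt, h3]
  have key : ∀ c : ℕ → ℤ, (∀ n < 24, bit c n = bt f' n) →
      (∀ k < 12, nz c k = 0 → c k % 3 ≠ 2) → FactI (word c) := by
    intro c hbit hsign hu hcnt
    have hnz : ∀ k ≤ 23, nz c k = ∑ n ∈ Finset.range k, bt f' n := fun k hk =>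
      Finset.sum_congr rfl fun n hn => hbit n (by have := Finset.mem_range.1 hn; omega)
    have hcor : ∀ d, corr c d = cor f' d := fun d =>
      Finset.sum_congr rfl fun n hn => by
        have h1 : n < 24 := by have := Finset.mem_range.1 hn; omega
        have h2 : (n + d) % 23 < 24 := (Nat.mod_lt _ (by norm_num)).trans (by norm_num)
        rw [hbit n h1, hbit _ h2]
    obtain ⟨h1, h2, h3⟩ := search_sound hall c (fun k hk => by
      rw [hnz k hk, hnz 23 le_rfl]; exact hbal' k hk) hsign (fun d hd => by
      rw [hcor, hcor]; exact hcan' d hd) hu hcnt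
    refine ⟨h1, h2, fun d ⟨d0, hd0⟩ hz => ?_⟩
    obtain ⟨l, hl⟩ := h3 d0 fun i hi h27 => by
      have a1 := hz i hi h27
      have a2 := hd0 i hi
      omega
    refine ⟨l, fun i hi => ?_⟩
    have a1 := hl i hi
    have a2 := hd0 i hi
    generalize l * word c i = y at a1 ⊢
    omega
  by_cases hs : ∀ k < 12, nz c k = 0 → c k % 3 ≠ 2
  · exact key c hbit hs
  · push Not at hs
    obtain ⟨k0, hk0, hz0, h2⟩ := hs
    have hneg : ∀ n, word (fun k => - c k) n = - word c n := fun n => by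
      unfold word
      split_ifs
      · rfl
      · rw [← Finset.sum_neg_distrib]
        exact Finset.sum_congr rfl fun k _ => by ring
    have hbneg : ∀ n, bit (fun k => - c k) n = bit c n := fun n => by
      simp only [bit, hneg, dvd_neg]
    refine FactI.of_neg ?_
    have := key (fun k => - c k) (fun n hn => (hbneg n).trans (hbit n hn)) fun k hk hz => by
      have hz' : nz c k = 0 := by
        rw [← hz]
        exact Finset.sum_congr rfl fun n _ => (hbneg n).symm
      have hbz : ∀ m, nz c m = 0 → ∀ i < m, (3 : ℤ) ∣ word c i := fun m hm i hi => by
        have := Finset.sum_eq_zero_iff.1 hm i (Finset.mem_range.2 hi)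
        by_contra hn
        rw [bit, if_neg hn] at this
        exact absurd this (by norm_num)
      rcases lt_trichotomy k k0 with h | h | h
      · have := hbz k0 hz0 k h
        rw [word_top c hk] at this
        omega
      · subst h
        omega
      · have := hbz k hz' k0 h
        rw [word_top c hk0] at this
        omega
    rwa [show word (fun k => - c k) = fun n => - word c n from funext hneg] at this


/-! ### The code in standard form over `ℤ/729ℤ` -/

/-- The number of coordinates divisible by `27`. -/
def zeros (c : Fin 24 → ZMod 729) : ℕ := (Finset.univ.filter fun i => (27 : ZMod 729) ∣ c i).card

/-- The properties of the code on which the vanishing of the weight enumerator rests. -/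
structure GoodCode (C : Submodule (ZMod 729) (Fin 24 → ZMod 729)) : Prop where
  /-- A codeword that is nonzero modulo `3` has at most `12` coordinates divisible by `27`. -/
  zeros_le : ∀ c ∈ C, (∃ i, ¬ (3 : ZMod 729) ∣ c i) → zeros c ≤ 12
  /-- In the extremal case these coordinates are not all divisible by `243`. -/
  not_deep : ∀ c ∈ C, (∃ i, ¬ (3 : ZMod 729) ∣ c i) → zeros c = 12 →
    ¬ ∀ i, (27 : ZMod 729) ∣ c i → (243 : ZMod 729) ∣ c i
  /-- In the extremal case the codewords vanishing modulo `3` on these coordinates form a line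
  modulo `3`. -/
  line : ∀ c ∈ C, (∃ i, ¬ (3 : ZMod 729) ∣ c i) → zeros c = 12 →
    ∀ d ∈ C, (∀ i, (27 : ZMod 729) ∣ c i → (3 : ZMod 729) ∣ d i) →
      ∃ l : ZMod 729, ∀ i, (3 : ZMod 729) ∣ d i - l * c i
  /-- Up to a diagonal change of coordinates, the code is self-dual. -/
  dual : ∃ s : Fin 24 → ZMod 729, (∀ i, IsUnit (s i)) ∧
    ∀ (N : ZMod 729) (b : Fin 24 → ZMod 729), (∀ d ∈ C, N ∣ ∑ i, b i * d i) →
      ∃ b' ∈ C, ∀ i, N ∣ b' i - s i * b i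

theorem GoodCode.perm {C D : Submodule (ZMod 729) (Fin 24 → ZMod 729)} (h : GoodCode D)
    (σ : Equiv.Perm (Fin 24)) (hσ : ∀ c, c ∈ C ↔ c ∘ σ ∈ D) : GoodCode C := by
  have hz : ∀ c, zeros (c ∘ σ) = zeros c := fun c => by
    unfold zeros
    refine Finset.card_bij (fun i _ => σ i) (fun i hi => ?_) (fun i _ j _ e => σ.injective e)
      fun i hi => ⟨σ.symm i, ?_, σ.apply_symm_apply i⟩
    · simpa using hi
    · simpa using hi
  have hu : ∀ c : Fin 24 → ZMod 729, (∃ i, ¬ (3 : ZMod 729) ∣ c i) →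
      ∃ i, ¬ (3 : ZMod 729) ∣ (c ∘ σ) i := fun c ⟨i, hi⟩ =>
    ⟨σ.symm i, by simpa using hi⟩
  refine ⟨fun c hc hn => ?_, fun c hc hn h12 h0 => ?_, fun c hc hn h12 d hd h0 => ?_, ?_⟩
  · rw [← hz]
    exact h.zeros_le _ ((hσ c).1 hc) (hu c hn)
  · exact h.not_deep _ ((hσ c).1 hc) (hu c hn) ((hz c).trans h12) fun i => h0 (σ i)
  · obtain ⟨l, hl⟩ := h.line _ ((hσ c).1 hc) (hu c hn) ((hz c).trans h12) _ ((hσ d).1 hd)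
      fun i => h0 (σ i)
    exact ⟨l, fun i => by simpa using hl (σ.symm i)⟩
  · obtain ⟨s, hs, hd⟩ := h.dual
    refine ⟨s ∘ σ.symm, fun i => hs _, fun N b hb => ?_⟩
    obtain ⟨b', hb', hb2⟩ := hd N (b ∘ σ) fun d hd => by
      have := hb (d ∘ σ.symm) ((hσ _).2 (by
        rwa [Function.comp_assoc, Equiv.symm_comp_self, Function.comp_id]))
      rw [← Equiv.sum_comp σ] at this
      simpa using this
    refine ⟨b' ∘ σ.symm, (hσ _).2 (by
      rwa [Function.comp_assoc, Equiv.symm_comp_self, Function.comp_id]), fun i => ?_⟩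
    simpa using hb2 (σ.symm i)

/-- The `i`-th information coordinate. -/
def top (i : Fin 12) : Fin 24 := ⟨i.1, by omega⟩

/-- The `j`-th check coordinate. -/
def bot (j : Fin 12) : Fin 24 := ⟨12 + j.1, by omega⟩

theorem top_or_bot (n : Fin 24) : (∃ i, n = top i) ∨ ∃ j, n = bot j := by
  rcases Nat.lt_or_ge n.1 12 with h | h
  · exact Or.inl ⟨⟨n.1, h⟩, rfl⟩
  · exact Or.inr ⟨⟨n.1 - 12, by omega⟩, Fin.ext (by simp only [bot]; omega)⟩

theorem sum_top_bot {M : Type*} [AddCommMonoid M] (F : Fin 24 → M) :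
    ∑ n, F n = ∑ i, F (top i) + ∑ j, F (bot j) :=
  Fin.sum_univ_add (a := 12) (b := 12) F

/-- The code generated by `[I | A]`. -/
def Std : Submodule (ZMod 729) (Fin 24 → ZMod 729) where
  carrier := {c | ∀ j : Fin 12, c (bot j) = ∑ i : Fin 12, c (top i) * (mA i j : ZMod 729)}
  zero_mem' := by simp
  add_mem' {a b} ha hb j := by
    simp only [Pi.add_apply, add_mul, Finset.sum_add_distrib]
    rw [ha j, hb j]
  smul_mem' r a ha j := by
    simp only [Pi.smul_apply, smul_eq_mul, mul_assoc, ← Finset.mul_sum]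
    rw [ha j]

theorem mem_Std {c : Fin 24 → ZMod 729} :
    c ∈ Std ↔ ∀ j : Fin 12, c (bot j) = ∑ i : Fin 12, c (top i) * (mA i j : ZMod 729) := Iff.rfl

/-- Integral representatives of the coordinates, extended by zero. -/
def lift (c : Fin 24 → ZMod 729) (n : ℕ) : ℤ := if h : n < 24 then ((c ⟨n, h⟩).val : ℤ) else 0

theorem lift_cast (c : Fin 24 → ZMod 729) (i : Fin 24) : ((lift c i : ℤ) : ZMod 729) = c i := by
  rw [lift, dif_pos i.2]
  simp

theorem dvd_int_iff (k : ℕ) (hk : k ∣ 729) (x : ℤ) :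
    (k : ZMod 729) ∣ (x : ZMod 729) ↔ (k : ℤ) ∣ x := by
  constructor
  · rintro ⟨y, hy⟩
    obtain ⟨z, rfl⟩ := ZMod.intCast_surjective y
    have h : ((x - k * z : ℤ) : ZMod 729) = 0 := by
      push_cast
      rw [hy, sub_self]
    rw [ZMod.intCast_zmod_eq_zero_iff_dvd] at h
    have h2 : (k : ℤ) ∣ x - k * z := (Int.natCast_dvd_natCast.2 hk).trans h
    exact (dvd_sub_left (dvd_mul_right _ _)).1 h2
  · rintro ⟨y, rfl⟩
    exact ⟨y, by push_cast; rfl⟩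

theorem dvd3_int (x : ℤ) : (3 : ZMod 729) ∣ (x : ZMod 729) ↔ (3 : ℤ) ∣ x :=
  dvd_int_iff 3 (by norm_num) x

theorem dvd27_int (x : ℤ) : (27 : ZMod 729) ∣ (x : ZMod 729) ↔ (27 : ℤ) ∣ x :=
  dvd_int_iff 27 (by norm_num) x

theorem dvd243_int (x : ℤ) : (243 : ZMod 729) ∣ (x : ZMod 729) ↔ (243 : ℤ) ∣ x :=
  dvd_int_iff 243 (by norm_num) x

theorem isCW_lift {c : Fin 24 → ZMod 729} (hc : c ∈ Std) : IsCW (lift c) := by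
  refine ⟨lift c, fun n hn => ?_⟩
  rcases Nat.lt_or_ge n 12 with h | h
  · rw [word_top _ h]
    simp
  · obtain ⟨j, rfl⟩ : ∃ j, n = 12 + j := ⟨n - 12, by omega⟩
    have hj : j < 12 := by omega
    rw [word_bot, show (729 : ℤ) = ((729 : ℕ) : ℤ) from rfl,
      ← ZMod.intCast_zmod_eq_zero_iff_dvd, Finset.sum_range]
    push_cast
    rw [sub_eq_zero]
    have e := hc ⟨j, hj⟩
    rw [← lift_cast c (bot _)] at e
    refine e.trans (Finset.sum_congr rfl fun i _ => ?_)
    rw [← lift_cast c (top i)]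
    rfl

theorem cnt_lift (c : Fin 24 → ZMod 729) : cnt (lift c) + zeros c = 24 := by
  rw [cnt, Finset.sum_range, zeros, Finset.card_eq_sum_ones, Finset.sum_filter,
    ← Finset.sum_add_distrib]
  refine (Finset.sum_congr rfl fun i _ => ?_ : _ = ∑ i : Fin 24, 1).trans (by simp)
  have h : (27 : ZMod 729) ∣ c i ↔ (27 : ℤ) ∣ lift c i := by
    rw [← dvd27_int, lift_cast]
  by_cases h1 : (27 : ZMod 729) ∣ c i
  · rw [if_pos h1, if_pos (h.1 h1)]
  · rw [if_neg h1, if_neg fun h2 => h1 (h.2 h2), add_zero]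

/-- `Aᵀ A = - diag(1, …, 1, -23)`. -/
theorem mA_gramT : ∀ j < 12, ∀ k < 12, (∑ i ∈ Finset.range 12, mA i j * mA i k) % 729 =
    if j = k then (if j = 11 then 23 else 728) else 0 := by
  decide +kernel

/-- The diagonal matrix relating the dual code to the code. -/
def scal (n : Fin 24) : ZMod 729 := if n.1 = 23 then -23 else 1

theorem isUnit_scal (n : Fin 24) : IsUnit (scal n) := by
  unfold scal
  split_ifs
  · exact IsUnit.of_mul_eq_one 412 (by decide +kernel)
  · exact isUnit_one

theorem gramT_cast (j k : Fin 12) :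
    ∑ i : Fin 12, (mA i j : ZMod 729) * (mA i k : ZMod 729) =
      if k = j then - scal (bot j) else 0 := by
  have h := mA_gramT j.1 j.2 k.1 k.2
  have e : ((∑ i ∈ Finset.range 12, mA i j * mA i k : ℕ) : ZMod 729) =
      ((if j.1 = k.1 then (if j.1 = 11 then 23 else 728) else 0 : ℕ) : ZMod 729) := by
    rw [← h, ZMod.natCast_mod]
  rw [Finset.sum_range] at e
  push_cast at e
  rw [e]
  by_cases h1 : k = j
  · have hb : (bot j).1 = 12 + j.1 := rfl
    rw [if_pos h1, if_pos (by rw [h1]), scal]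
    by_cases h2 : j.1 = 11
    · rw [if_pos h2, if_pos (by omega), neg_neg]
    · rw [if_neg h2, if_neg (by omega)]
      rfl
  · rw [if_neg h1, if_neg fun h => h1 (Fin.ext h.symm)]

/-- The codeword with given information coordinates. -/
def enc (t : Fin 12 → ZMod 729) (n : Fin 24) : ZMod 729 :=
  if h : n.1 < 12 then t ⟨n.1, h⟩ else ∑ i : Fin 12, t i * (mA i (n.1 - 12) : ZMod 729)

theorem enc_top (t : Fin 12 → ZMod 729) (i : Fin 12) : enc t (top i) = t i := by
  rw [enc, dif_pos (show (top i).1 < 12 from i.2)]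
  rfl

theorem enc_bot (t : Fin 12 → ZMod 729) (j : Fin 12) :
    enc t (bot j) = ∑ i : Fin 12, t i * (mA i j : ZMod 729) := by
  have hb : (bot j).1 = 12 + j.1 := rfl
  rw [enc, dif_neg (by omega), hb, Nat.add_sub_cancel_left]

theorem enc_mem (t : Fin 12 → ZMod 729) : enc t ∈ Std := fun j => by
  simp only [enc_top, enc_bot]

theorem std_dual (N : ZMod 729) (b : Fin 24 → ZMod 729) (hb : ∀ d ∈ Std, N ∣ ∑ i, b i * d i) :
    ∃ b' ∈ Std, ∀ i, N ∣ b' i - scal i * b i := by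
  have hrow : ∀ i : Fin 12, N ∣ b (top i) + ∑ j, b (bot j) * (mA i j : ZMod 729) := fun i => by
    have := hb _ (enc_mem (Pi.single i 1))
    rw [sum_top_bot] at this
    simpa [enc_top, enc_bot, Pi.single_apply] using this
  refine ⟨enc fun i => b (top i), enc_mem _, fun n => ?_⟩
  rcases top_or_bot n with ⟨i, rfl⟩ | ⟨j, rfl⟩
  · rw [enc_top, scal, if_neg (show ¬ (top i).1 = 23 by have : (top i).1 = i.1 := rfl; omega)]
    simp
  · rw [enc_bot]
    have h2 : ∑ i : Fin 12, b (top i) * (mA i j : ZMod 729) - scal (bot j) * b (bot j) =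
        ∑ i : Fin 12, (b (top i) + ∑ k, b (bot k) * (mA i k : ZMod 729)) *
          (mA i j : ZMod 729) := by
      simp only [add_mul, Finset.sum_add_distrib, Finset.sum_mul]
      rw [Finset.sum_comm (γ := Fin 12)]
      have : ∀ k : Fin 12, ∑ i : Fin 12, b (bot k) * (mA i k : ZMod 729) * (mA i j : ZMod 729) =
          if k = j then - (scal (bot j) * b (bot j)) else 0 := fun k => by
        simp only [mul_assoc, ← Finset.mul_sum]
        rw [show ∑ i : Fin 12, (mA i k : ZMod 729) * (mA i j : ZMod 729) =
          ∑ i : Fin 12, (mA i j : ZMod 729) * (mA i k : ZMod 729) from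
          Finset.sum_congr rfl fun i _ => mul_comm _ _, gramT_cast]
        split_ifs with h
        · subst h
          ring
        · ring
      simp only [this]
      simp [sub_eq_add_neg]
    rw [h2]
    exact Finset.dvd_sum fun i _ => (hrow i).mul_right _

theorem goodCode_Std (hall : checkAll = true) : GoodCode Std := by
  have hfact : ∀ c ∈ Std, FactI (lift c) := fun c hc => factI_of_isCW hall _ (isCW_lift hc)
  have hun : ∀ c : Fin 24 → ZMod 729, (∃ i, ¬ (3 : ZMod 729) ∣ c i) →
      ∃ i < 24, ¬ (3 : ℤ) ∣ lift c i := fun c ⟨i, hi⟩ =>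
    ⟨i.1, i.2, by rwa [← dvd3_int, lift_cast]⟩
  refine ⟨fun c hc hu => ?_, fun c hc hu h12 h0 => ?_, fun c hc hu h12 d hd h0 => ?_,
    scal, isUnit_scal, std_dual⟩
  · by_contra! hlt
    have h24 := cnt_lift c
    have := (hfact c hc (hun c hu) (by omega)).1
    omega
  · have h24 := cnt_lift c
    refine (hfact c hc (hun c hu) (by omega)).2.1 fun i hi h27 => ?_
    have := h0 ⟨i, hi⟩
    rw [← lift_cast c, dvd27_int, dvd243_int] at this
    exact this h27
  · have h24 := cnt_lift c
    obtain ⟨l, hl⟩ := (hfact c hc (hun c hu) (by omega)).2.2 _ (isCW_lift hd) fun i hi h27 => by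
      have := h0 ⟨i, hi⟩
      rw [← lift_cast c, ← lift_cast d, dvd27_int, dvd3_int] at this
      exact this h27
    refine ⟨l, fun i => ?_⟩
    have := hl i i.2
    rw [← dvd3_int] at this
    push_cast at this
    rwa [lift_cast, lift_cast] at this


/-! ### Duality and the shifting lemma -/

theorem dvd_cancel (k l : ℕ) (hkl : k * l ∣ 729) (a : ZMod 729)
    (h : (k : ZMod 729) * l ∣ k * a) : (l : ZMod 729) ∣ a := by
  obtain ⟨x, rfl⟩ := ZMod.intCast_surjective a
  have hk : k ≠ 0 := by
    rintro rfl
    simp at hkl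
  have h' : ((k * l : ℕ) : ZMod 729) ∣ ((k * x : ℤ) : ZMod 729) := by exact_mod_cast h
  rw [dvd_int_iff _ hkl] at h'
  push_cast at h'
  rw [dvd_int_iff _ ((Dvd.intro_left k rfl).trans hkl)]
  exact Int.dvd_of_mul_dvd_mul_left (by exact_mod_cast hk) h'

theorem isUnit_of_not_dvd {a : ZMod 729} (h : ¬ (3 : ZMod 729) ∣ a) : IsUnit a := by
  obtain ⟨x, rfl⟩ := ZMod.intCast_surjective a
  rw [dvd3_int] at h
  rw [ZMod.coe_int_isUnit_iff_isCoprime]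
  have : IsCoprime (3 : ℤ) x := (Int.prime_three.coprime_iff_not_dvd).2 h
  simpa using this.pow_left (m := 6)

theorem not_dvd_of_isUnit {a : ZMod 729} (h : IsUnit a) : ¬ (3 : ZMod 729) ∣ a := fun h3 => by
  have h1 : (3 : ZMod 729) ∣ ((1 : ℤ) : ZMod 729) := by
    push_cast
    exact h3.trans h.dvd
  rw [dvd3_int] at h1
  omega

theorem not_dvd_mul {a b : ZMod 729} (ha : ¬ (3 : ZMod 729) ∣ a) (hb : ¬ (3 : ZMod 729) ∣ b) :
    ¬ (3 : ZMod 729) ∣ a * b :=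
  not_dvd_of_isUnit ((isUnit_of_not_dvd ha).mul (isUnit_of_not_dvd hb))

theorem mul27_eq_zero {a : ZMod 729} (h : (27 : ZMod 729) ∣ a) : 27 * a = 0 := by
  obtain ⟨x, rfl⟩ := h
  rw [← mul_assoc, show (27 : ZMod 729) * 27 = 0 from by decide +kernel, zero_mul]

/-- Duality: either `v` agrees modulo `N` with a codeword on the coordinates in `S`, or a
functional supported on `S` separates it from the code. It comes from a character of the quotient
by the submodule of all vectors agreeing with a codeword modulo `N` on `S`. -/
theorem separate (C : Submodule (ZMod 729) (Fin 24 → ZMod 729)) (S : Fin 24 → Prop) (N : ℕ)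
    (hN : N ∣ 729) (v : Fin 24 → ZMod 729) :
    (∃ d ∈ C, ∀ i, S i → (N : ZMod 729) ∣ v i - d i) ∨
    ∃ b : Fin 24 → ZMod 729, (∀ i, ¬ S i → b i = 0) ∧
      (∀ d ∈ C, (N : ZMod 729) ∣ ∑ i, b i * d i) ∧ ¬ (N : ZMod 729) ∣ ∑ i, b i * v i := by
  set M : Submodule (ZMod 729) (Fin 24 → ZMod 729) :=
    { carrier := {x | ∃ d ∈ C, ∀ i, S i → (N : ZMod 729) ∣ x i - d i}
      zero_mem' := ⟨0, C.zero_mem, by simp⟩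
      add_mem' := by
        rintro x y ⟨d, hd, hx⟩ ⟨e, he, hy⟩
        refine ⟨d + e, C.add_mem hd he, fun i hi => ?_⟩
        have := dvd_add (hx i hi) (hy i hi)
        rwa [show x i - d i + (y i - e i) = (x + y) i - (d + e) i by
          simp only [Pi.add_apply]; ring] at this
      smul_mem' := by
        rintro r x ⟨d, hd, hx⟩
        refine ⟨r • d, C.smul_mem r hd, fun i hi => ?_⟩
        have := (hx i hi).mul_left r
        rwa [mul_sub] at this } with hM
  by_cases hv : v ∈ M
  · exact Or.inl hv
  right
  have hN0 : N ≠ 0 := by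
    rintro rfl
    simp at hN
  obtain ⟨φ, hφ⟩ := CharacterModule.exists_character_apply_ne_zero_of_ne_zero
    (A := (Fin 24 → ZMod 729) ⧸ M) (a := M.mkQ v)
    (by rwa [Submodule.mkQ_apply, ne_eq, Submodule.Quotient.mk_eq_zero])
  set ψ : (Fin 24 → ZMod 729) →+ AddCircle (1 : ℚ) :=
    AddMonoidHom.comp φ M.mkQ.toAddMonoidHom with hψ
  have hψM : ∀ x ∈ M, ψ x = 0 := fun x hx => by
    have : M.mkQ x = 0 := by rwa [Submodule.mkQ_apply, Submodule.Quotient.mk_eq_zero]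
    change φ (M.mkQ x) = 0
    rw [this, map_zero]
  have hval : ∀ i, ∃ b : ℤ, (¬ S i → b = 0) ∧
      ψ (Pi.single i 1) = (((b : ℚ) / N : ℚ) : AddCircle (1 : ℚ)) := fun i => by
    by_cases hS : S i
    · have h0 : N • ψ (Pi.single i 1) = 0 := by
        rw [← map_nsmul]
        refine hψM _ ⟨0, C.zero_mem, fun k _ => ?_⟩
        simp
      obtain ⟨y, hy⟩ := QuotientAddGroup.mk_surjective (ψ (Pi.single i 1))
      have hy' : ((y : ℚ) : AddCircle (1 : ℚ)) = ψ (Pi.single i 1) := hy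
      rw [← hy', ← AddCircle.coe_nsmul, AddCircle.coe_eq_zero_iff] at h0
      obtain ⟨n, hn⟩ := h0
      refine ⟨n, fun h => absurd hS h, ?_⟩
      rw [← hy']
      congr 1
      have : (N : ℚ) ≠ 0 := by exact_mod_cast hN0
      field_simp
      simp only [nsmul_eq_mul, zsmul_eq_mul, mul_one] at hn
      linarith
    · refine ⟨0, fun _ => rfl, ?_⟩
      rw [hψM _ ⟨0, C.zero_mem, fun k hk => ?_⟩]
      · simp
      · rw [Pi.single_eq_of_ne (show k ≠ i by rintro rfl; exact hS hk)]
        simp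
  choose b hb0 hb using hval
  have hall : ∀ x, ψ x = 0 ↔ (N : ZMod 729) ∣ ∑ i, (b i : ZMod 729) * x i := fun x => by
    have hx : x = ∑ i, (x i).val • (Pi.single i 1 : Fin 24 → ZMod 729) := by
      funext k
      rw [Finset.sum_apply, Finset.sum_eq_single k]
      · rw [Pi.smul_apply, Pi.single_eq_same, nsmul_eq_mul, mul_one, ZMod.natCast_zmod_val]
      · intro i _ hi
        rw [Pi.smul_apply, Pi.single_eq_of_ne hi.symm, smul_zero]
      · simp
    have e1 : ψ x = (((∑ i, (x i).val * b i : ℤ) : ℚ) / N : ℚ) := by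
      conv_lhs => rw [hx]
      rw [map_sum]
      simp only [map_nsmul, hb, ← AddCircle.coe_nsmul]
      push_cast
      rw [Finset.sum_div]
      rw [← QuotientAddGroup.mk'_apply, map_sum]
      refine Finset.sum_congr rfl fun i _ => ?_
      rw [QuotientAddGroup.mk'_apply]
      congr 1
      rw [nsmul_eq_mul]
      ring
    have e2 : ((∑ i, (x i).val * b i : ℤ) : ZMod 729) = ∑ i, (b i : ZMod 729) * x i := by
      push_cast
      exact Finset.sum_congr rfl fun i _ => by simp [mul_comm]
    rw [← e2, dvd_int_iff N hN, e1, AddCircle.coe_eq_zero_iff]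
    have hq : (N : ℚ) ≠ 0 := by exact_mod_cast hN0
    constructor
    · rintro ⟨n, hn⟩
      refine ⟨n, ?_⟩
      simp only [zsmul_eq_mul, mul_one] at hn
      rw [eq_div_iff hq] at hn
      have : ((∑ i, (x i).val * b i : ℤ) : ℚ) = ((N * n : ℤ) : ℚ) := by
        rw [← hn]
        push_cast
        ring
      exact_mod_cast this
    · rintro ⟨n, hn⟩
      refine ⟨n, ?_⟩
      rw [hn, zsmul_eq_mul, mul_one, eq_div_iff hq]
      push_cast
      ring
  refine ⟨fun i => b i, fun i hi => by simp [hb0 i hi], fun d hd => ?_, fun h => ?_⟩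
  · exact (hall d).1 (hψM d ⟨d, hd, by simp⟩)
  · exact hφ ((hall v).2 h)

theorem exists_mul_eq_three {q : ZMod 729} (h : ¬ (9 : ZMod 729) ∣ q) : ∃ k, q * k = 3 := by
  by_cases h3 : (3 : ZMod 729) ∣ q
  · obtain ⟨r, rfl⟩ := h3
    have hr : ¬ (3 : ZMod 729) ∣ r := fun ⟨t, ht⟩ => h ⟨t, by rw [ht]; ring⟩
    obtain ⟨u, rfl⟩ := isUnit_of_not_dvd hr
    exact ⟨↑u⁻¹, by rw [mul_assoc, Units.mul_inv, mul_one]⟩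
  · obtain ⟨u, rfl⟩ := isUnit_of_not_dvd h3
    exact ⟨↑u⁻¹ * 3, by rw [← mul_assoc, Units.mul_inv, one_mul]⟩

/-- The shifting lemma: the coordinates of `c` divisible by `27` can be changed by `243` at a
single one of them, while the other coordinates only change by a unit and multiples of `27`. -/
theorem shifting {C : Submodule (ZMod 729) (Fin 24 → ZMod 729)} (hC : GoodCode C)
    {c : Fin 24 → ZMod 729} (hc : c ∈ C) (hu : ∃ i, ¬ (3 : ZMod 729) ∣ c i) (j : Fin 24) :
    ∃ u : ZMod 729, ∃ d ∈ C, IsUnit u ∧ ∀ i, (27 : ZMod 729) ∣ c i →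
      u * c i + 27 * d i = c i + if i = j then 243 else 0 := by
  have h327 : (3 : ZMod 729) ∣ 27 := ⟨9, by norm_num⟩
  rcases separate C (fun i => (27 : ZMod 729) ∣ c i) 27 (by norm_num)
    (fun i => if i = j then 9 else 0) with ⟨d, hd, hdv⟩ | ⟨b, hb0, hbC, hbv⟩
  · refine ⟨1, d, hd, isUnit_one, fun i hi => ?_⟩
    have := mul27_eq_zero (hdv i hi)
    rw [mul_sub, sub_eq_zero] at this
    rw [← this, one_mul]
    split_ifs
    · norm_num
    · norm_num
  have hbj : ¬ (3 : ZMod 729) ∣ b j := by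
    rintro ⟨r, hr⟩
    refine hbv ⟨r, ?_⟩
    simp only [mul_ite, mul_zero, Finset.sum_ite_eq', Finset.mem_univ, if_true, hr]
    push_cast
    ring
  obtain ⟨s, hs, hdual⟩ := hC.dual
  obtain ⟨b', hb', hbb⟩ := hdual 27 b hbC
  have hb'u : ∃ i, ¬ (3 : ZMod 729) ∣ b' i := ⟨j, fun h =>
    not_dvd_mul (not_dvd_of_isUnit (hs j)) hbj ((dvd_sub_right h).1 (h327.trans (hbb j)))⟩
  have hoff : ∀ i, ¬ (27 : ZMod 729) ∣ c i → (27 : ZMod 729) ∣ b' i := fun i hi => by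
    simpa [hb0 i hi] using hbb i
  -- the two words have complementary sets of coordinates divisible by `27`
  have hcle := hC.zeros_le c hc hu
  have hble := hC.zeros_le b' hb' hb'u
  have hcompl : (Finset.univ.filter fun i => ¬ (27 : ZMod 729) ∣ c i).card + zeros c = 24 := by
    rw [zeros, add_comm, Finset.card_filter_add_card_filter_not]
    simp
  have hsub : (Finset.univ.filter fun i => ¬ (27 : ZMod 729) ∣ c i) ⊆
      Finset.univ.filter fun i => (27 : ZMod 729) ∣ b' i := fun i hi => by
    simp only [Finset.mem_filter, Finset.mem_univ, true_and] at hi ⊢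
    exact hoff i hi
  have hle : _ ≤ zeros b' := Finset.card_le_card hsub
  have hc12 : zeros c = 12 := by omega
  have hb12 : zeros b' = 12 := by omega
  have hset := Finset.eq_of_subset_of_card_le hsub (show zeros b' ≤ _ by omega)
  have hon : ∀ i, (27 : ZMod 729) ∣ b' i → ¬ (27 : ZMod 729) ∣ c i := fun i hi => by
    have : i ∈ Finset.univ.filter fun i => (27 : ZMod 729) ∣ b' i := by simpa using hi
    rw [← hset] at this
    simpa using this
  -- functionals supported on `S` are multiples of `b`
  have hG : ∀ k ≤ 3, ∀ β : Fin 24 → ZMod 729, (∀ i, ¬ (27 : ZMod 729) ∣ c i → β i = 0) →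
      (∀ d ∈ C, ((3 ^ k : ℕ) : ZMod 729) ∣ ∑ i, β i * d i) →
      ∃ l : ZMod 729, ∀ i, ((3 ^ k : ℕ) : ZMod 729) ∣ β i - l * b i := by
    intro k
    induction k with
    | zero => exact fun _ β _ _ => ⟨0, fun i => by simp⟩
    | succ k ih =>
      intro hk β hβ0 hβ
      obtain ⟨l, hl⟩ := ih (by omega) β hβ0 fun d hd => (by
        rw [pow_succ]
        push_cast
        exact dvd_mul_right _ _ : _ ∣ _).trans (hβ d hd)
      have hγ : ∀ i, ∃ γ : ZMod 729, (¬ (27 : ZMod 729) ∣ c i → γ = 0) ∧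
          β i - l * b i = ((3 ^ k : ℕ) : ZMod 729) * γ := fun i => by
        by_cases hi : (27 : ZMod 729) ∣ c i
        · obtain ⟨γ, h⟩ := hl i
          exact ⟨γ, fun h' => absurd hi h', h⟩
        · exact ⟨0, fun _ => rfl, by rw [hβ0 i hi, hb0 i hi]; ring⟩
      choose γ hγ0 hγ using hγ
      have hpk : 3 ^ k * 3 ∣ 729 := by
        rw [← pow_succ]
        exact (pow_dvd_pow 3 hk).trans (by norm_num)
      have hpk27 : ((3 ^ k : ℕ) : ZMod 729) * (3 : ℕ) ∣ 27 := by
        have := Nat.cast_dvd_cast (α := ZMod 729) (pow_dvd_pow 3 hk)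
        rw [pow_succ, Nat.cast_mul] at this
        simpa using this
      have h3 : ∀ d ∈ C, (3 : ZMod 729) ∣ ∑ i, γ i * d i := fun d hd => by
        refine dvd_cancel (3 ^ k) 3 hpk _ ?_
        have e : ((3 ^ k : ℕ) : ZMod 729) * ∑ i, γ i * d i =
            ∑ i, β i * d i - l * ∑ i, b i * d i := by
          rw [Finset.mul_sum, Finset.mul_sum, ← Finset.sum_sub_distrib]
          refine Finset.sum_congr rfl fun i _ => ?_
          rw [← mul_assoc, ← hγ i]
          ring
        rw [e]
        refine dvd_sub ?_ ((hpk27.trans (hbC d hd)).mul_left l)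
        have := hβ d hd
        rwa [pow_succ, Nat.cast_mul] at this
      obtain ⟨γ', hγ', hγγ⟩ := hdual 3 γ h3
      obtain ⟨m, hm⟩ := hC.line b' hb' hb'u hb12 γ' hγ' fun i hi => by
        simpa [hγ0 i (hon i hi)] using hγγ i
      refine ⟨l + ((3 ^ k : ℕ) : ZMod 729) * m, fun i => ?_⟩
      have h1 : (3 : ZMod 729) ∣ γ i - m * b i := by
        have : (3 : ZMod 729) ∣ s i * (γ i - m * b i) := by
          have := dvd_add (dvd_sub (hm i) (hγγ i)) ((h327.trans (hbb i)).mul_left m)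
          rwa [show γ' i - m * b' i - (γ' i - s i * γ i) + m * (b' i - s i * b i) =
            s i * (γ i - m * b i) by ring] at this
        exact ((hs i).dvd_mul_left).1 this
      have h2 : β i - (l + ((3 ^ k : ℕ) : ZMod 729) * m) * b i =
          ((3 ^ k : ℕ) : ZMod 729) * (γ i - m * b i) := by
        rw [mul_sub, ← hγ i]
        ring
      rw [h2, pow_succ, Nat.cast_mul]
      exact mul_dvd_mul_left _ h1
  have hpair : ∀ k ≤ 3, ∀ β v : Fin 24 → ZMod 729, (∀ i, ¬ (27 : ZMod 729) ∣ c i → β i = 0) →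
      (∀ d ∈ C, ((3 ^ k : ℕ) : ZMod 729) ∣ ∑ i, β i * d i) →
      ((3 ^ k : ℕ) : ZMod 729) ∣ ∑ i, b i * v i → ((3 ^ k : ℕ) : ZMod 729) ∣ ∑ i, β i * v i := by
    intro k hk β v hβ0 hβ hv
    obtain ⟨l, hl⟩ := hG k hk β hβ0 hβ
    have e : ∑ i, β i * v i = ∑ i, (β i - l * b i) * v i + l * ∑ i, b i * v i := by
      rw [Finset.mul_sum, ← Finset.sum_add_distrib]
      exact Finset.sum_congr rfl fun i _ => by ring
    rw [e]
    exact dvd_add (Finset.dvd_sum fun i _ => (hl i).mul_right _) (hv.mul_left l)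
  have hw : ∀ i, ∃ w, (27 : ZMod 729) ∣ c i → c i = 27 * w := fun i => by
    by_cases hi : (27 : ZMod 729) ∣ c i
    · obtain ⟨w, h⟩ := hi
      exact ⟨w, fun _ => h⟩
    · exact ⟨0, fun h => absurd h hi⟩
  choose w hw using hw
  have hq : ¬ (9 : ZMod 729) ∣ ∑ i, b i * w i := by
    intro hq
    rcases separate C (fun i => (27 : ZMod 729) ∣ c i) 9 (by norm_num) w with
      ⟨d, hd, hdw⟩ | ⟨β, hβ0, hβC, hβw⟩
    · have hiff : ∀ i, (27 : ZMod 729) ∣ (c - (27 : ZMod 729) • d) i ↔ (27 : ZMod 729) ∣ c i :=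
        fun i => dvd_sub_left (dvd_mul_right _ _)
      refine hC.not_deep (c - (27 : ZMod 729) • d) (C.sub_mem hc (C.smul_mem _ hd)) ?_ ?_ ?_
      · obtain ⟨i, hi⟩ := hu
        exact ⟨i, fun h => hi ((dvd_sub_left (h327.trans (dvd_mul_right _ _))).1 h)⟩
      · rw [← hc12, zeros, zeros]
        simp only [hiff]
      · intro i hi
        rw [hiff] at hi
        rw [Pi.sub_apply, Pi.smul_apply, smul_eq_mul, hw i hi, ← mul_sub]
        obtain ⟨y, hy⟩ := hdw i hi
        exact ⟨y, by rw [hy]; push_cast; ring⟩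
    · exact hβw (hpair 2 (by norm_num) β w hβ0 hβC hq)
  obtain ⟨k, hk⟩ := exists_mul_eq_three hq
  rcases separate C (fun i => (27 : ZMod 729) ∣ c i) 27 (by norm_num)
    (fun i => - (3 * k * b j) * w i + if i = j then 9 else 0) with
      ⟨d, hd, hdv⟩ | ⟨β, hβ0, hβC, hβv⟩
  · refine ⟨1 + 3 * k * b j, d, hd, isUnit_of_not_dvd fun h => ?_, fun i hi => ?_⟩
    · rw [mul_assoc] at h
      exact not_dvd_of_isUnit isUnit_one ((dvd_add_left (dvd_mul_right _ _)).1 h)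
    · have := mul27_eq_zero (hdv i hi)
      rw [mul_sub, sub_eq_zero] at this
      rw [← this, hw i hi]
      split_ifs
      · ring
      · ring
  · refine absurd (hpair 3 le_rfl β _ hβ0 hβC ?_) hβv
    simp only [mul_add, Finset.sum_add_distrib, mul_ite, mul_zero, Finset.sum_ite_eq',
      Finset.mem_univ, if_true]
    have e : ∑ i, b i * (-(3 * k * b j) * w i) = -(3 * b j) * ((∑ i, b i * w i) * k) := by
      rw [Finset.sum_mul, Finset.mul_sum]
      exact Finset.sum_congr rfl fun i _ => by ring
    rw [e, hk]
    exact ⟨0, by ring⟩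


/-! ### The weight enumerator as a sum over codewords -/

/-- The substitution defining `A_{3,3}`. -/
def sub33 : Fin 7 → MvPolynomial (Fin 7) ℚ :=
  ![X 0, X 1, X 2, X 6 - X 5, X 6 + 2 * X 5 - 3 * X 4,
    X 6 + 2 * X 5 + 6 * X 4 - 9 * X 3, X 6 + 2 * X 5 + 6 * X 4 + 18 * X 3]

/-- The substitution `sub33` with `y_0` set to zero. -/
def sub33' : Fin 7 → MvPolynomial (Fin 7) ℚ :=
  ![X 0, X 1, X 2, X 6 - X 5, X 6 + 2 * X 5 - 3 * X 4,
    X 6 + 2 * X 5 + 6 * X 4, X 6 + 2 * X 5 + 6 * X 4]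

theorem three_pow_dvd (k : ℕ) (hk : k ≤ 6) (a : ZMod 729) :
    ((3 ^ k : ℕ) : ZMod 729) ∣ a ↔ 3 ^ k ∣ a.val := by
  have h := dvd_int_iff (3 ^ k) (pow_dvd_pow 3 hk) (a.val : ℤ)
  rw [Int.cast_natCast, ZMod.natCast_zmod_val, Int.natCast_dvd_natCast] at h
  exact h

theorem padic_lt {a : ZMod 729} (ha : a ≠ 0) : padicValNat 3 a.val < 6 := by
  have hv : a.val ≠ 0 := by rwa [ne_eq, ZMod.val_eq_zero]
  by_contra! h
  have h1 : 3 ^ 6 ∣ a.val := (pow_dvd_pow 3 h).trans pow_padicValNat_dvd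
  have := Nat.le_of_dvd (Nat.pos_of_ne_zero hv) h1
  have := a.val_lt
  omega

/-- The index of the variable recording the entry `a`: its valuation, or `6` if `a = 0`. -/
def vl (a : ZMod 729) : Fin 7 :=
  if h : a = 0 then 6 else ⟨padicValNat 3 a.val, (padic_lt h).trans (by norm_num)⟩

theorem le_vl_iff (a : ZMod 729) (k : ℕ) (hk : k ≤ 6) :
    ((3 ^ k : ℕ) : ZMod 729) ∣ a ↔ k ≤ (vl a).1 := by
  rw [three_pow_dvd k hk]
  by_cases h : a = 0
  · subst h
    rw [vl, dif_pos rfl]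
    simpa using hk
  · have hv : a.val ≠ 0 := by rwa [ne_eq, ZMod.val_eq_zero]
    have : Fact (Nat.Prime 3) := ⟨Nat.prime_three⟩
    rw [vl, dif_neg h, padicValNat_dvd_iff_le hv]

theorem vl_congr {a b : ZMod 729}
    (h : ∀ k ≤ 6, ((3 ^ k : ℕ) : ZMod 729) ∣ a ↔ ((3 ^ k : ℕ) : ZMod 729) ∣ b) : vl a = vl b := by
  have ha := (vl a).2
  have hb := (vl b).2
  refine Fin.ext (le_antisymm ?_ ?_)
  · rw [← le_vl_iff b _ (by omega), ← h _ (by omega), le_vl_iff a _ (by omega)]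
  · rw [← le_vl_iff a _ (by omega), h _ (by omega), le_vl_iff b _ (by omega)]

theorem swe_eq (C : Submodule (ZMod 729) (Fin 24 → ZMod 729)) :
    swe 3 6 C = ∑ c : Fin 24 → ZMod 729, if c ∈ C then ∏ j, X (vl (c j)) else 0 := by
  unfold swe
  refine Finset.sum_congr rfl fun c _ => ?_
  refine if_congr Iff.rfl ?_ rfl
  have h1 : ∏ j, (X (vl (c j)) : MvPolynomial (Fin 7) ℚ) =
      ∏ k : Fin 7, X k ^ (Finset.univ.filter fun j => vl (c j) = k).card := by
    rw [← Finset.prod_fiberwise' Finset.univ (fun j => vl (c j)) X]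
    exact Finset.prod_congr rfl fun k _ => by rw [Finset.prod_const]
  rw [h1, Fin.prod_univ_castSucc (n := 6)]
  have h2 : ∀ a : ZMod 729, vl a = Fin.last 6 ↔ a = 0 := fun a => by
    by_cases h : a = 0
    · rw [vl, dif_pos h]
      exact ⟨fun _ => h, fun _ => rfl⟩
    · rw [vl, dif_neg h]
      have := padic_lt h
      refine ⟨fun e => ?_, fun e => absurd e h⟩
      have e' := congrArg Fin.val e
      simp only [Fin.val_last] at e'
      omega
  have h3 : ∀ (a : ZMod 729) (i : Fin 6), vl a = Fin.castSucc i ↔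
      a ≠ 0 ∧ padicValNat 3 a.val = (i : ℕ) := fun a i => by
    by_cases h : a = 0
    · refine ⟨fun e => ?_, fun e => absurd h e.1⟩
      rw [(h2 a).2 h] at e
      exact absurd e.symm (Fin.castSucc_lt_last i).ne
    · rw [vl, dif_neg h, Fin.ext_iff]
      exact ⟨fun e => ⟨h, e⟩, fun e => e.2⟩
  refine congrArg₂ (· * ·) (Finset.prod_congr rfl fun i _ => ?_) ?_
  · refine congrArg (X (Fin.castSucc i) ^ ·) (congrArg Finset.card ?_)
    exact Finset.filter_congr fun j _ => (h3 (c j) i).symm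
  · refine congrArg (X (Fin.last 6) ^ ·) (congrArg Finset.card ?_)
    exact Finset.filter_congr fun j _ => (h2 (c j)).symm

/-- The contribution of `y_0` to the substituted variable of the entry `a`. -/
def dif (a : ZMod 729) : MvPolynomial (Fin 7) ℚ := sub33 (vl a) - sub33' (vl a)

theorem dif_eq_zero {a : ZMod 729} (h : ¬ (243 : ZMod 729) ∣ a) : dif a = 0 := by
  have h5 := le_vl_iff a 5 (by norm_num)
  norm_num at h5
  have h5' : (vl a).1 < 5 := by
    by_contra! hh
    exact h (h5.2 hh)
  unfold dif
  generalize vl a = k at h5'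
  fin_cases k <;> simp [sub33, sub33'] at h5' ⊢

theorem vl_zero : vl 0 = 6 := dif_pos rfl

theorem vl_243 : vl 243 = 5 := by
  have h5 := le_vl_iff 243 5 (by norm_num)
  have h6 := le_vl_iff 243 6 (by norm_num)
  have h1 : ((3 ^ 5 : ℕ) : ZMod 729) ∣ 243 := ⟨1, by norm_num⟩
  have h2 : ¬ ((3 ^ 6 : ℕ) : ZMod 729) ∣ 243 := by
    rw [three_pow_dvd 6 le_rfl]
    decide
  rw [h5] at h1
  rw [h6] at h2
  exact Fin.ext (by simp; omega)

theorem vl_486 : vl 486 = 5 := by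
  have h5 := le_vl_iff 486 5 (by norm_num)
  have h6 := le_vl_iff 486 6 (by norm_num)
  have h1 : ((3 ^ 5 : ℕ) : ZMod 729) ∣ 486 := ⟨2, by norm_num⟩
  have h2 : ¬ ((3 ^ 6 : ℕ) : ZMod 729) ∣ 486 := by
    rw [three_pow_dvd 6 le_rfl]
    decide
  rw [h5] at h1
  rw [h6] at h2
  exact Fin.ext (by simp; omega)

theorem dif_add {a : ZMod 729} (h : (243 : ZMod 729) ∣ a) :
    dif a + dif (a + 243) + dif (a + 243 + 243) = 0 := by
  have hv : a = 0 ∨ a = 243 ∨ a = 486 := by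
    rw [show (243 : ZMod 729) = ((243 : ℕ) : ZMod 729) from rfl,
      show (243 : ℕ) = 3 ^ 5 from rfl, three_pow_dvd 5 (by norm_num)] at h
    have hlt := a.val_lt
    have h3 : a.val = 0 ∨ a.val = 243 ∨ a.val = 486 := by omega
    rw [← ZMod.natCast_zmod_val a]
    rcases h3 with h | h | h <;> rw [h] <;> simp
  have s0 : dif 0 = 18 * X 3 := by
    rw [dif, vl_zero]
    simp [sub33, sub33']
  have s1 : dif 243 = -(9 * X 3) := by
    rw [dif, vl_243]
    simp [sub33, sub33']
  have s2 : dif 486 = -(9 * X 3) := by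
    rw [dif, vl_486]
    simp [sub33, sub33']
  have e1 : (243 : ZMod 729) + 243 = 486 := by norm_num
  have e2 : (486 : ZMod 729) + 243 = 0 := by decide +kernel
  rcases hv with rfl | rfl | rfl
  · rw [zero_add, e1, s0, s1, s2]; ring
  · rw [e1, e2, s0, s1, s2]; ring
  · rw [e2, zero_add, s0, s1, s2]; ring

/-! ### Cancellation over the codewords that are nonzero modulo `3` -/

/-- The codewords that are nonzero modulo `3`. -/
@[irreducible]
def unitWords (C : Submodule (ZMod 729) (Fin 24 → ZMod 729)) : Finset (Fin 24 → ZMod 729) :=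
  Finset.univ.filter fun c => c ∈ C ∧ ∃ i, ¬ (3 : ZMod 729) ∣ c i

theorem mem_unitWords {C : Submodule (ZMod 729) (Fin 24 → ZMod 729)} {c : Fin 24 → ZMod 729} :
    c ∈ unitWords C ↔ c ∈ C ∧ ∃ i, ¬ (3 : ZMod 729) ∣ c i := by
  unfold unitWords
  exact Finset.mem_filter_univ c

/-- The codewords that vanish modulo `3`. -/
@[irreducible]
def zeroWords (C : Submodule (ZMod 729) (Fin 24 → ZMod 729)) : Finset (Fin 24 → ZMod 729) :=
  Finset.univ.filter fun c => c ∈ C ∧ ∀ i, (3 : ZMod 729) ∣ c i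

theorem mem_zeroWords {C : Submodule (ZMod 729) (Fin 24 → ZMod 729)} {c : Fin 24 → ZMod 729} :
    c ∈ zeroWords C ↔ c ∈ C ∧ ∀ i, (3 : ZMod 729) ∣ c i := by
  unfold zeroWords
  exact Finset.mem_filter_univ c

/-- A permutation of the codewords considered that adds `243` to the `j`-th coordinate and
preserves the valuations of all other coordinates. The multiplier and the added codeword depend on
`c` only through its coordinates divisible by `27`, which can be recovered from the image; this
makes the map injective. -/
theorem exists_shift {C : Submodule (ZMod 729) (Fin 24 → ZMod 729)} (hC : GoodCode C)
    (j : Fin 24) : ∃ Φ : (Fin 24 → ZMod 729) → Fin 24 → ZMod 729,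
      Set.InjOn Φ ((unitWords C).filter fun c => (243 : ZMod 729) ∣ c j) ∧
      ∀ c ∈ (unitWords C).filter fun c => (243 : ZMod 729) ∣ c j,
        Φ c ∈ (unitWords C).filter (fun c => (243 : ZMod 729) ∣ c j) ∧ Φ c j = c j + 243 ∧
        ∀ i ≠ j, vl (Φ c i) = vl (c i) := by
  set key : (Fin 24 → ZMod 729) → Fin 24 → ZMod 729 := fun c i =>
    if (27 : ZMod 729) ∣ c i then c i else 1 with hkey
  have h27_1 : ¬ (27 : ZMod 729) ∣ 1 := by
    have := dvd27_int 1
    rw [Int.cast_one] at this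
    rw [this]
    norm_num
  have hex : ∀ κ : Fin 24 → ZMod 729, ∃ u : ZMod 729, ∃ d : Fin 24 → ZMod 729,
      (∃ c ∈ unitWords C, key c = κ) → d ∈ C ∧ IsUnit u ∧ ∀ i, (27 : ZMod 729) ∣ κ i →
        u * κ i + 27 * d i = κ i + if i = j then 243 else 0 := by
    intro κ
    by_cases h : ∃ c ∈ unitWords C, key c = κ
    · obtain ⟨c, hc, rfl⟩ := h
      rw [mem_unitWords] at hc
      obtain ⟨u, d, hd, hu, h⟩ := shifting hC hc.1 hc.2 j
      refine ⟨u, d, fun _ => ⟨hd, hu, fun i hi => ?_⟩⟩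
      by_cases h27 : (27 : ZMod 729) ∣ c i
      · simp only [hkey, if_pos h27]
        exact h i h27
      · simp only [hkey, if_neg h27] at hi
        exact absurd hi h27_1
    · exact ⟨0, 0, fun h' => absurd h' h⟩
  choose u d hud using hex
  set Φ : (Fin 24 → ZMod 729) → Fin 24 → ZMod 729 := fun c i =>
    u (key c) * c i + 27 * d (key c) i with hΦ
  have hd : ∀ c ∈ unitWords C, d (key c) ∈ C := fun c hc => (hud _ ⟨c, hc, rfl⟩).1
  have hu : ∀ c ∈ unitWords C, IsUnit (u (key c)) := fun c hc => (hud _ ⟨c, hc, rfl⟩).2.1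
  have hon : ∀ c ∈ unitWords C, ∀ i, (27 : ZMod 729) ∣ c i →
      Φ c i = c i + if i = j then 243 else 0 := fun c hc i hi => by
    have := (hud _ ⟨c, hc, rfl⟩).2.2 i
    simp only [hkey, if_pos hi] at this
    exact this hi
  have hdvd : ∀ c ∈ unitWords C, ∀ i, ∀ n : ZMod 729, n ∣ 27 → (n ∣ Φ c i ↔ n ∣ c i) :=
    fun c hc i n hn => by
      rw [hΦ]
      dsimp only
      rw [dvd_add_left (hn.mul_right _), (hu c hc).dvd_mul_left]
  refine ⟨Φ, fun c hc c' hc' he => ?_, fun c hc => ?_⟩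
  · rw [Finset.mem_coe, Finset.mem_filter] at hc hc'
    have hrec : ∀ c ∈ unitWords C, key c = fun i =>
        if (27 : ZMod 729) ∣ Φ c i then Φ c i - (if i = j then 243 else 0) else 1 :=
      fun c hc => funext fun i => by
        by_cases h27 : (27 : ZMod 729) ∣ c i
        · rw [if_pos ((hdvd c hc i 27 dvd_rfl).2 h27), hon c hc i h27, add_sub_cancel_right]
          exact if_pos h27
        · rw [if_neg fun h => h27 ((hdvd c hc i 27 dvd_rfl).1 h)]
          exact if_neg h27
    have hk : key c = key c' := by rw [hrec c hc.1, hrec c' hc'.1, he]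
    funext i
    have := congrFun he i
    simp only [hΦ, hk] at this
    exact (hu c' hc'.1).mul_left_cancel (add_right_cancel this)
  · rw [Finset.mem_filter] at hc
    obtain ⟨hc, h243⟩ := hc
    have h27 : (27 : ZMod 729) ∣ 243 := ⟨9, by norm_num⟩
    have hj : Φ c j = c j + 243 := by rw [hon c hc j (h27.trans h243), if_pos rfl]
    refine ⟨?_, hj, fun i hi => ?_⟩
    · rw [Finset.mem_filter]
      refine ⟨?_, by rw [hj]; exact dvd_add h243 dvd_rfl⟩
      have hmem := hc
      rw [mem_unitWords] at hmem ⊢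
      refine ⟨?_, ?_⟩
      · exact C.add_mem (C.smul_mem (u (key c)) hmem.1) (C.smul_mem 27 (hd c hc))
      · obtain ⟨i, hi⟩ := hmem.2
        exact ⟨i, fun h => hi ((hdvd c hc i 3 ⟨9, by norm_num⟩).1 h)⟩
    · by_cases hi27 : (27 : ZMod 729) ∣ c i
      · rw [hon c hc i hi27, if_neg hi, add_zero]
      · refine vl_congr fun k hk => ?_
        rcases Nat.lt_or_ge k 4 with h | h
        · have := Nat.cast_dvd_cast (α := ZMod 729) (pow_dvd_pow 3 (show k ≤ 3 by omega))
          exact hdvd c hc i _ (by simpa using this)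
        · have h3 := Nat.cast_dvd_cast (α := ZMod 729) (pow_dvd_pow 3 (show 3 ≤ k by omega))
          have h3' : (27 : ZMod 729) ∣ ((3 ^ k : ℕ) : ZMod 729) := by simpa using h3
          exact ⟨fun h => absurd ((hdvd c hc i 27 dvd_rfl).1 (h3'.trans h)) hi27,
            fun h => absurd (h3'.trans h) hi27⟩

theorem sum_ite_split {α M : Type*} [Fintype α] [AddCommMonoid M] (p q q' : α → Prop)
    [DecidablePred p] [DecidablePred fun a => p a ∧ q a] [DecidablePred fun a => p a ∧ q' a]
    (hq : ∀ a, q' a ↔ ¬ q a) (F : α → M) : (∑ a, if p a then F a else 0) =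
      ∑ a ∈ Finset.univ.filter (fun a => p a ∧ q a), F a +
        ∑ a ∈ Finset.univ.filter (fun a => p a ∧ q' a), F a := by
  rw [Finset.sum_filter, Finset.sum_filter, ← Finset.sum_add_distrib]
  refine Finset.sum_congr rfl fun a _ => ?_
  by_cases hp : p a <;> by_cases h : q a <;> simp [hp, h, hq]

theorem sum_split (C : Submodule (ZMod 729) (Fin 24 → ZMod 729))
    (F : (Fin 24 → ZMod 729) → MvPolynomial (Fin 7) ℚ) :
    (∑ c, if c ∈ C then F c else 0) = ∑ c ∈ unitWords C, F c + ∑ c ∈ zeroWords C, F c := by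
  unfold unitWords zeroWords
  exact sum_ite_split (fun c => c ∈ C) (fun c => ∃ i, ¬ (3 : ZMod 729) ∣ c i)
    (fun c => ∀ i, (3 : ZMod 729) ∣ c i) (fun c => not_exists_not.symm) F

theorem sum_dif_eq_zero {C : Submodule (ZMod 729) (Fin 24 → ZMod 729)} (hC : GoodCode C)
    (j : Fin 24) (h : Fin 24 → Fin 7 → MvPolynomial (Fin 7) ℚ) :
    ∑ c ∈ unitWords C, dif (c j) * ∏ i ∈ Finset.univ.erase j, h i (vl (c i)) = 0 := by
  obtain ⟨Φ, hinj, hΦ⟩ := exists_shift hC j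
  set U := (unitWords C).filter fun c => (243 : ZMod 729) ∣ c j with hU
  have himg : U.image Φ = U := Finset.eq_of_subset_of_card_le
    (Finset.image_subset_iff.2 fun c hc => (hΦ c hc).1)
    (Finset.card_image_of_injOn hinj).ge
  have hG : ∀ G : ZMod 729 → MvPolynomial (Fin 7) ℚ,
      ∑ c ∈ U, G (c j + 243) * ∏ i ∈ Finset.univ.erase j, h i (vl (c i)) =
      ∑ c ∈ U, G (c j) * ∏ i ∈ Finset.univ.erase j, h i (vl (c i)) := fun G => by
    conv_rhs => rw [← himg]
    rw [Finset.sum_image hinj]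
    refine Finset.sum_congr rfl fun c hc => ?_
    rw [(hΦ c hc).2.1]
    refine congrArg (G (c j + 243) * ·) (Finset.prod_congr rfl fun i hi => ?_)
    rw [(hΦ c hc).2.2 i (Finset.ne_of_mem_erase hi)]
  have h0 : ∑ c ∈ unitWords C, dif (c j) * ∏ i ∈ Finset.univ.erase j, h i (vl (c i)) =
      ∑ c ∈ U, dif (c j) * ∏ i ∈ Finset.univ.erase j, h i (vl (c i)) := by
    rw [hU, Finset.sum_filter_of_ne]
    intro c _ hne
    by_contra h243
    rw [dif_eq_zero h243, zero_mul] at hne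
    exact hne rfl
  rw [h0]
  have h1 := hG dif
  have h2 := hG fun a => dif (a + 243)
  have h3 : ∑ c ∈ U, (dif (c j) + dif (c j + 243) + dif (c j + 243 + 243)) *
      ∏ i ∈ Finset.univ.erase j, h i (vl (c i)) = 0 :=
    Finset.sum_eq_zero fun c hc => by rw [dif_add (Finset.mem_filter.1 hc).2, zero_mul]
  simp only [add_mul, Finset.sum_add_distrib] at h3
  rw [h2, h1] at h3
  generalize ∑ c ∈ U, dif (c j) * ∏ i ∈ Finset.univ.erase j, h i (vl (c i)) = Y at h3
  have h4 : (3 : MvPolynomial (Fin 7) ℚ) * Y = 0 := by linear_combination h3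
  exact (mul_eq_zero.1 h4).resolve_left (by norm_num)

/-- Over the codewords that are nonzero modulo `3`, the variable `y_0` may be set to zero. -/
theorem sum_unitWords {C : Submodule (ZMod 729) (Fin 24 → ZMod 729)} (hC : GoodCode C) :
    ∑ c ∈ unitWords C, ∏ i, sub33 (vl (c i)) = ∑ c ∈ unitWords C, ∏ i, sub33' (vl (c i)) := by
  -- the coordinates in `T` are the ones already replaced
  have key : ∀ T : Finset (Fin 24), ∑ c ∈ unitWords C, ∏ i, sub33 (vl (c i)) =
      ∑ c ∈ unitWords C, ∏ i, (if i ∈ T then sub33' else sub33) (vl (c i)) := by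
    intro T
    induction T using Finset.induction_on with
    | empty => simp
    | insert j T hj ih =>
      rw [ih, ← sub_eq_zero, ← Finset.sum_sub_distrib,
        ← sum_dif_eq_zero hC j fun i => if i ∈ T then sub33' else sub33]
      refine Finset.sum_congr rfl fun c _ => ?_
      rw [← Finset.mul_prod_erase Finset.univ _ (Finset.mem_univ j),
        ← Finset.mul_prod_erase Finset.univ (fun i =>
          (if i ∈ insert j T then sub33' else sub33) (vl (c i))) (Finset.mem_univ j),
        if_neg hj, if_pos (Finset.mem_insert_self j T), dif, sub_mul]
      refine congrArg (sub33 (vl (c j)) * _ - sub33' (vl (c j)) * ·)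
        (Finset.prod_congr rfl fun i hi => ?_)
      have : i ∈ insert j T ↔ i ∈ T := by
        simp [Finset.ne_of_mem_erase hi]
      simp only [this]
  simpa using key Finset.univ

theorem coeff_eq_zero_of_supported {i : Fin 7} {p : MvPolynomial (Fin 7) ℚ}
    (hp : p ∈ supported ℚ ({i}ᶜ : Set (Fin 7))) {d : Fin 7 →₀ ℕ} (hd : d i ≠ 0) :
    coeff d p = 0 := by
  by_contra h
  rw [mem_supported] at hp
  have : i ∈ p.vars := (mem_vars_iff_mem_support i).2 ⟨d, mem_support_iff.2 h, Finsupp.mem_support_iff.2 hd⟩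
  exact hp this rfl

theorem sub33'_supported (k : Fin 7) : sub33' k ∈ supported ℚ ({3}ᶜ : Set (Fin 7)) := by
  have hX : ∀ i : Fin 7, i ≠ 3 →
      (X i : MvPolynomial (Fin 7) ℚ) ∈ supported ℚ ({3}ᶜ : Set (Fin 7)) := fun i hi =>
    X_mem_supported.2 hi
  have h0 := hX 0 (by decide)
  have h1 := hX 1 (by decide)
  have h2 := hX 2 (by decide)
  have h4 := hX 4 (by decide)
  have h5 := hX 5 (by decide)
  have h6 := hX 6 (by decide)
  have hn : ∀ n : ℕ, (n : MvPolynomial (Fin 7) ℚ) ∈ supported ℚ ({3}ᶜ : Set (Fin 7)) :=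
    fun n => natCast_mem _ n
  have a := Subalgebra.add_mem _ h6 (Subalgebra.mul_mem _ (hn 2) h5)
  have b := Subalgebra.add_mem _ a (Subalgebra.mul_mem _ (hn 6) h4)
  have e := Subalgebra.sub_mem _ a (Subalgebra.mul_mem _ (hn 3) h4)
  fin_cases k
  exacts [h0, h1, h2, Subalgebra.sub_mem _ h6 h5, e, b, b]

theorem sub33_supported (k : Fin 7) (hk : k ≠ 0) :
    sub33 k ∈ supported ℚ ({0}ᶜ : Set (Fin 7)) := by
  have hX : ∀ i : Fin 7, i ≠ 0 →
      (X i : MvPolynomial (Fin 7) ℚ) ∈ supported ℚ ({0}ᶜ : Set (Fin 7)) := fun i hi =>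
    X_mem_supported.2 hi
  have h1 := hX 1 (by decide)
  have h2 := hX 2 (by decide)
  have h3 := hX 3 (by decide)
  have h4 := hX 4 (by decide)
  have h5 := hX 5 (by decide)
  have h6 := hX 6 (by decide)
  have hn : ∀ n : ℕ, (n : MvPolynomial (Fin 7) ℚ) ∈ supported ℚ ({0}ᶜ : Set (Fin 7)) :=
    fun n => natCast_mem _ n
  have a := Subalgebra.add_mem _ h6 (Subalgebra.mul_mem _ (hn 2) h5)
  have b := Subalgebra.add_mem _ a (Subalgebra.mul_mem _ (hn 6) h4)
  have e := Subalgebra.sub_mem _ a (Subalgebra.mul_mem _ (hn 3) h4)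
  fin_cases k
  exacts [absurd rfl hk, h1, h2, Subalgebra.sub_mem _ h6 h5, e,
    Subalgebra.sub_mem _ b (Subalgebra.mul_mem _ (hn 9) h3),
    Subalgebra.add_mem _ b (Subalgebra.mul_mem _ (hn 18) h3)]

theorem divPart_eq_zero {A : MvPolynomial (Fin 7) ℚ} {i j : Fin 7}
    (h : ∀ d : Fin 7 →₀ ℕ, d i ≠ 0 → d j ≠ 0 → coeff d A = 0) : divPart A i j = 0 := by
  rw [divPart]
  refine Finset.sum_eq_zero fun d hd => ?_
  rw [Finset.mem_filter] at hd
  rw [h d hd.2.1 hd.2.2, monomial_zero]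

theorem divPart_eq_zero_of_goodCode {C : Submodule (ZMod 729) (Fin 24 → ZMod 729)}
    (hC : GoodCode C) (r : ℚ) : divPart (r • aeval sub33 (swe 3 6 C)) 0 3 = 0 := by
  set Q : MvPolynomial (Fin 7) ℚ :=
    ∑ c ∈ zeroWords C, ∏ i, sub33 (vl (c i)) with hQ
  have hsum : aeval sub33 (swe 3 6 C) =
      ∑ c ∈ unitWords C, ∏ i, sub33' (vl (c i)) + Q := by
    rw [← sum_unitWords hC, swe_eq, map_sum, hQ, ← sum_split C]
    refine Finset.sum_congr rfl fun c _ => ?_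
    rw [apply_ite (aeval sub33), map_prod, map_zero]
    simp only [aeval_X]
  have h1 : ∑ c ∈ unitWords C, ∏ i, sub33' (vl (c i)) ∈ supported ℚ ({3}ᶜ : Set (Fin 7)) :=
    Subalgebra.sum_mem _ fun c _ => Subalgebra.prod_mem _ fun i _ => sub33'_supported _
  have h2 : Q ∈ supported ℚ ({0}ᶜ : Set (Fin 7)) :=
    Subalgebra.sum_mem _ fun c hc => Subalgebra.prod_mem _ fun i _ => sub33_supported _ (by
      have h := (mem_zeroWords.1 hc).2 i
      have h3 := le_vl_iff (c i) 1 (by norm_num)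
      norm_num at h3
      intro h0
      have h4 := h3.1 h
      rw [h0] at h4
      exact absurd h4 (by norm_num))
  refine divPart_eq_zero fun d hd0 hd3 => ?_
  rw [hsum, coeff_smul, coeff_add, coeff_eq_zero_of_supported h1 hd3,
    coeff_eq_zero_of_supported h2 hd0]
  simp


/-! ### Identification of the code -/

instance : Nontrivial (ZMod 729) := ZMod.nontrivial_iff.2 (by norm_num)

/-- The coefficients of one of the two degree `11` factors of `x ^ 23 - 1` modulo `729`. -/
def gA (k : ℕ) : ℕ := [728, 635, 638, 4, 97, 189, 185, 90, 725, 633, 636, 1].getD k 0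

/-- The coefficients of the other factor, the monic reciprocal of the first. -/
def gB (k : ℕ) : ℕ := [728, 93, 96, 4, 639, 544, 540, 632, 725, 91, 94, 1].getD k 0

/-- The polynomial of degree at most `11` with coefficient sequence `γ`. -/
def poly (γ : ℕ → ℕ) : Polynomial (ZMod 729) :=
  ∑ k ∈ Finset.range 12, Polynomial.C (γ k : ZMod 729) * Polynomial.X ^ k

theorem poly_coeff (γ : ℕ → ℕ) (n : ℕ) :
    (poly γ).coeff n = if n < 12 then (γ n : ZMod 729) else 0 := by
  unfold poly
  rw [Polynomial.finsetSum_coeff]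
  simp only [Polynomial.coeff_C_mul_X_pow, Finset.sum_ite_eq, Finset.mem_range]

theorem poly_natDegree_le (γ : ℕ → ℕ) : (poly γ).natDegree ≤ 11 := by
  rw [Polynomial.natDegree_le_iff_coeff_eq_zero]
  intro n hn
  rw [poly_coeff, if_neg (by omega)]

theorem poly_monic {γ : ℕ → ℕ} (h : γ 11 = 1) : (poly γ).Monic :=
  Polynomial.monic_of_natDegree_le_of_coeff_eq_one 11 (poly_natDegree_le γ) (by
    rw [poly_coeff, if_pos (by norm_num), h, Nat.cast_one])

theorem poly_natDegree {γ : ℕ → ℕ} (h : γ 11 = 1) : (poly γ).natDegree = 11 := by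
  refine le_antisymm (poly_natDegree_le γ) (Polynomial.le_natDegree_of_ne_zero ?_)
  rw [poly_coeff, if_pos (by norm_num), h, Nat.cast_one]
  exact one_ne_zero

theorem factorization :
    (Polynomial.X - 1) * poly gA * poly gB = (Polynomial.X ^ 23 - 1 : Polynomial (ZMod 729)) := by
  have h729 : (729 : Polynomial (ZMod 729)) = 0 := by
    rw [show (729 : Polynomial (ZMod 729)) = Polynomial.C (729 : ZMod 729) from rfl,
      show (729 : ZMod 729) = 0 from by decide +kernel, Polynomial.C_0]
  have hA : poly gA = 728 + 635 * Polynomial.X + 638 * Polynomial.X ^ 2 + 4 * Polynomial.X ^ 3 +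
      97 * Polynomial.X ^ 4 + 189 * Polynomial.X ^ 5 + 185 * Polynomial.X ^ 6 +
      90 * Polynomial.X ^ 7 + 725 * Polynomial.X ^ 8 + 633 * Polynomial.X ^ 9 +
      636 * Polynomial.X ^ 10 + Polynomial.X ^ 11 := by
    simp [poly, Finset.sum_range_succ, gA]
  have hB : poly gB = 728 + 93 * Polynomial.X + 96 * Polynomial.X ^ 2 + 4 * Polynomial.X ^ 3 +
      639 * Polynomial.X ^ 4 + 544 * Polynomial.X ^ 5 + 540 * Polynomial.X ^ 6 +
      632 * Polynomial.X ^ 7 + 725 * Polynomial.X ^ 8 + 91 * Polynomial.X ^ 9 +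
      94 * Polynomial.X ^ 10 + Polynomial.X ^ 11 := by
    simp [poly, Finset.sum_range_succ, gB]
  rw [hA, hB]
  generalize (Polynomial.X : Polynomial (ZMod 729)) = x
  linear_combination (-727 - 87 * x ^ 2 + 641 * x ^ 3 - 650 * x ^ 4 - 482 * x ^ 5 - 489 * x ^ 6 +
    74 * x ^ 7 - 876 * x ^ 8 + 342 * x ^ 9 + 256 * x ^ 10 + 1221 * x ^ 11 - 494 * x ^ 12 -
    257 * x ^ 13 - 337 * x ^ 14 + 155 * x ^ 15 - 67 * x ^ 16 + 493 * x ^ 17 + 478 * x ^ 18 +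
    643 * x ^ 19 + 80 * x ^ 20 + 82 * x ^ 21 + x ^ 22) * h729

/-- Uniqueness of the Hensel lift: a monic divisor of `x ^ 23 - 1` of the degree of `G` that
agrees with the divisor `G` modulo `3` is equal to `G`. -/
theorem lift_unique {q G H : Polynomial (ZMod 729)} (h3 : 3 ∣ 729)
    (hq : q.Monic) (hG : G.Monic) (hdeg : G.natDegree ≤ q.natDegree)
    (hGH : G * H = Polynomial.X ^ 23 - 1) (hdvd : q ∣ Polynomial.X ^ 23 - 1)
    (hmod : q.map (ZMod.castHom h3 (ZMod 3)) = G.map (ZMod.castHom h3 (ZMod 3))) : q = G := by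
  set ρ := ZMod.castHom h3 (ZMod 3) with hρ
  have hsep : (Polynomial.X ^ 23 - 1 : Polynomial (ZMod 3)).Separable := by
    have : Fact (Nat.Prime 3) := ⟨Nat.prime_three⟩
    rw [Polynomial.X_pow_sub_one_separable_iff]
    decide
  have hmap : G.map ρ * H.map ρ = (Polynomial.X ^ 23 - 1 : Polynomial (ZMod 3)) := by
    rw [← Polynomial.map_mul, hGH]
    simp
  rw [← hmap, ← hmod] at hsep
  obtain ⟨a, b, hab⟩ := hsep.isCoprime
  have hsurj : Function.Surjective (Polynomial.map ρ) :=
    Polynomial.map_surjective _ (ZMod.castHom_surjective h3)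
  obtain ⟨a, rfl⟩ := hsurj a
  obtain ⟨b, rfl⟩ := hsurj b
  have hnil : IsNilpotent (a * q + b * H - 1) := by
    rw [Polynomial.isNilpotent_iff]
    intro i
    have h0 : ρ ((a * q + b * H - 1).coeff i) = 0 := by
      rw [← Polynomial.coeff_map, Polynomial.map_sub, Polynomial.map_add, Polynomial.map_mul,
        Polynomial.map_mul, hab]
      simp
    generalize (a * q + b * H - 1).coeff i = x at h0 ⊢
    have h3x : (3 : ZMod 729) ∣ x := by
      obtain ⟨y, rfl⟩ := ZMod.intCast_surjective x
      rw [map_intCast, ZMod.intCast_zmod_eq_zero_iff_dvd] at h0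
      rw [dvd3_int]
      exact h0
    obtain ⟨y, rfl⟩ := h3x
    exact ⟨6, by rw [mul_pow, show (3 : ZMod 729) ^ 6 = 0 from by decide +kernel, zero_mul]⟩
  have hunit : IsUnit (a * q + b * H) := by
    have := hnil.isUnit_one_add
    rwa [add_sub_cancel] at this
  have hcop : IsCoprime q H := by
    obtain ⟨u, hu⟩ := hunit
    refine ⟨↑u⁻¹ * a, ↑u⁻¹ * b, ?_⟩
    rw [mul_assoc, mul_assoc, ← mul_add, ← hu, Units.inv_mul]
  rw [← hGH] at hdvd
  exact (Polynomial.eq_of_monic_of_dvd_of_natDegree_le hq hG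
    (hcop.dvd_of_dvd_mul_right hdvd) hdeg).symm

/-- The generator polynomial is one of the two explicit ones. -/
theorem eq_gA_or_gB {g : Polynomial (ZMod 3)} (hg : IsQRFactor 3 g) {q : Polynomial (ZMod 729)}
    (h3 : 3 ∣ 729) (hq : q.Monic) (hdeg : q.natDegree = 11)
    (hdvd : q ∣ Polynomial.X ^ 23 - 1) (hmod : q.map (ZMod.castHom h3 (ZMod 3)) = g) :
    q = poly gA ∨ q = poly gB := by
  have : Fact (Nat.Prime 3) := ⟨Nat.prime_three⟩
  set ρ := ZMod.castHom h3 (ZMod 3) with hρ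
  obtain ⟨hgm, hgd, hgi, hgdvd⟩ := hg
  have hf := congrArg (Polynomial.map ρ) factorization
  rw [Polynomial.map_mul, Polynomial.map_mul] at hf
  simp only [Polynomial.map_sub, Polynomial.map_X, Polynomial.map_one, Polynomial.map_pow] at hf
  rw [← hf] at hgdvd
  have hmon : ∀ γ : ℕ → ℕ, γ 11 = 1 → ((poly γ).map ρ).Monic ∧ ((poly γ).map ρ).natDegree = 11 :=
    fun γ hγ => ⟨(poly_monic hγ).map _, by
      rw [(poly_monic hγ).natDegree_map, poly_natDegree hγ]⟩
  have heq : ∀ γ : ℕ → ℕ, γ 11 = 1 → g ∣ (poly γ).map ρ → (poly γ).map ρ = g :=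
    fun γ hγ hd => Polynomial.eq_of_monic_of_dvd_of_natDegree_le hgm (hmon γ hγ).1 hd (by
      rw [(hmon γ hγ).2, hgd])
  rcases hgi.prime.dvd_or_dvd hgdvd with h | h
  · rcases hgi.prime.dvd_or_dvd h with h | h
    · have := Polynomial.natDegree_le_of_dvd h (Polynomial.X_sub_C_ne_zero 1)
      rw [hgd, ← Polynomial.C_1, Polynomial.natDegree_X_sub_C] at this
      omega
    · left
      refine lift_unique h3 hq (poly_monic rfl) (by rw [poly_natDegree rfl, hdeg])
        (H := (Polynomial.X - 1) * poly gB) ?_ hdvd ?_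
      · rw [← factorization]
        ring
      · rw [hmod, ← heq gA rfl h]
  · right
    refine lift_unique h3 hq (poly_monic rfl) (by rw [poly_natDegree rfl, hdeg])
      (H := (Polynomial.X - 1) * poly gA) ?_ hdvd ?_
    · rw [← factorization]
      ring
    · rw [hmod, ← heq gB rfl h]

/-- The rows of the circulant generator matrix, extended by an overall parity check. -/
def grow (γ : ℕ → ℕ) (k n : ℕ) : ℕ :=
  if n < 23 then (if k ≤ n ∧ n < k + 12 then γ (n - k) else 0)
  else 728 * ∑ i ∈ Finset.range 12, γ i

theorem mul_poly_coeff (γ : ℕ → ℕ) (y : Fin 12 → ZMod 729) (n : ℕ) (hn : n < 23) :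
    ((∑ k : Fin 12, Polynomial.C (y k) * Polynomial.X ^ (k : ℕ)) * poly γ).coeff n =
      ∑ k : Fin 12, y k * (grow γ k n : ZMod 729) := by
  rw [Finset.sum_mul, Polynomial.finsetSum_coeff]
  refine Finset.sum_congr rfl fun k _ => ?_
  rw [mul_assoc, Polynomial.coeff_C_mul, Polynomial.coeff_X_pow_mul', poly_coeff, grow, if_pos hn]
  refine congrArg (y k * ·) ?_
  by_cases h1 : k.1 ≤ n
  · by_cases h2 : n < k.1 + 12
    · rw [if_pos h1, if_pos (by omega), if_pos ⟨h1, h2⟩]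
    · rw [if_pos h1, if_neg (by omega), if_neg fun h => h2 h.2, Nat.cast_zero]
  · rw [if_neg h1, if_neg fun h => h1 h.1, Nat.cast_zero]

theorem code_rows {γ : ℕ → ℕ} (h11 : γ 11 = 1) {K : Polynomial (ZMod 729)}
    (hK : poly γ * K = Polynomial.X ^ 23 - 1)
    (hpar : ∀ k < 12, (∑ n ∈ Finset.range 24, grow γ k n) % 729 = 0)
    (c : Fin 24 → ZMod 729) :
    ((∃ f : Polynomial (ZMod 729), ∀ j : Fin 23,
        c (Fin.castSucc j) = ((f * poly γ) %ₘ (Polynomial.X ^ 23 - 1)).coeff (j : ℕ)) ∧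
      c (Fin.last 23) = - ∑ j : Fin 23, c (Fin.castSucc j)) ↔
    ∃ y : Fin 12 → ZMod 729, ∀ n : Fin 24, c n = ∑ k : Fin 12, y k * (grow γ k n : ZMod 729) := by
  have hmonX : (Polynomial.X ^ 23 - 1 : Polynomial (ZMod 729)).Monic :=
    Polynomial.monic_X_pow_sub_C 1 (by norm_num)
  have hdegX : (Polynomial.X ^ 23 - 1 : Polynomial (ZMod 729)).natDegree = 23 :=
    Polynomial.natDegree_X_pow_sub_C
  have hKm : K.Monic := by
    have := hmonX
    rw [← hK] at this
    exact (poly_monic h11).of_mul_monic_left this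
  have hKd : K.natDegree = 12 := by
    have := (poly_monic h11).natDegree_mul hKm
    rw [hK, hdegX, poly_natDegree h11] at this
    omega
  -- reduction of a multiple of the generator
  have hred : ∀ (f r : Polynomial (ZMod 729)), K ∣ f - r → r.natDegree < 12 →
      (f * poly γ) %ₘ (Polynomial.X ^ 23 - 1) = r * poly γ := by
    rintro f r ⟨t, ht⟩ hr
    refine (Polynomial.div_modByMonic_unique t _ hmonX ⟨?_, ?_⟩).2
    · rw [← hK]
      linear_combination -(poly γ) * ht
    · refine Polynomial.degree_lt_degree ?_
      rw [hdegX]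
      have h1 := Polynomial.natDegree_mul_le (p := r) (q := poly γ)
      have h2 := poly_natDegree_le γ
      omega
  have hpar' : ∀ k : Fin 12, (grow γ k 23 : ZMod 729) = - ∑ j : Fin 23, (grow γ k j : ZMod 729) :=
    fun k => by
      have h := hpar k k.2
      have h0 : ((∑ n ∈ Finset.range 24, grow γ k n : ℕ) : ZMod 729) = 0 := by
        rw [ZMod.natCast_eq_zero_iff]
        exact Nat.dvd_of_mod_eq_zero h
      rw [Finset.sum_range_succ, Finset.sum_range] at h0
      push_cast at h0
      rw [eq_neg_iff_add_eq_zero, add_comm]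
      exact h0
  have hlast : ∀ y : Fin 12 → ZMod 729,
      ∑ k : Fin 12, y k * (grow γ k 23 : ZMod 729) =
        - ∑ j : Fin 23, ∑ k : Fin 12, y k * (grow γ k j : ZMod 729) := fun y => by
    rw [Finset.sum_comm, ← Finset.sum_neg_distrib]
    refine Finset.sum_congr rfl fun k _ => ?_
    rw [hpar' k, ← Finset.mul_sum, mul_neg]
  constructor
  · rintro ⟨⟨f, hf⟩, hl⟩
    have hr : (f %ₘ K).natDegree < 12 := by
      rw [← hKd]
      refine Polynomial.natDegree_modByMonic_lt f hKm fun h => ?_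
      rw [h, Polynomial.natDegree_one] at hKd
      omega
    set r := f %ₘ K with hrdef
    have hrs : r = ∑ k : Fin 12, Polynomial.C (r.coeff k) * Polynomial.X ^ (k : ℕ) := by
      rw [← Finset.sum_range fun k => Polynomial.C (r.coeff k) * Polynomial.X ^ k]
      exact Polynomial.as_sum_range_C_mul_X_pow' r hr
    have hj : ∀ j : Fin 23, c (Fin.castSucc j) =
        ∑ k : Fin 12, r.coeff k * (grow γ k j : ZMod 729) := fun j => by
      rw [hf j, hred f r ⟨f /ₘ K, by
        have := Polynomial.modByMonic_add_div f K
        rw [← hrdef] at this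
        linear_combination -this⟩ hr]
      conv_lhs => rw [hrs]
      exact mul_poly_coeff γ _ j j.2
    refine ⟨fun k => r.coeff k, Fin.lastCases ?_ hj⟩
    rw [hl, Finset.sum_congr rfl fun j _ => hj j]
    exact (hlast _).symm
  · rintro ⟨y, hy⟩
    refine ⟨⟨∑ k : Fin 12, Polynomial.C (y k) * Polynomial.X ^ (k : ℕ), fun j => ?_⟩, ?_⟩
    · rw [hred _ (∑ k : Fin 12, Polynomial.C (y k) * Polynomial.X ^ (k : ℕ)) (by simp) ?_,
        mul_poly_coeff γ y j j.2]
      · exact hy _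
      · refine Nat.lt_of_le_of_lt (Polynomial.natDegree_sum_le_of_forall_le (n := 11) _ _
          fun k _ => ?_) (by norm_num)
        exact (Polynomial.natDegree_C_mul_X_pow_le _ _).trans (by omega)
    · rw [hy (Fin.last 23), Finset.sum_congr rfl fun j _ => hy (Fin.castSucc j)]
      exact hlast y

/-- A permutation turning the circulant generator matrix into a generator matrix of `Std`; the
matrix `u` inverts its information part. -/
theorem rows_std {γ : ℕ → ℕ} (σ : Equiv.Perm (Fin 24)) (u : ℕ → ℕ → ℕ)
    (h1 : ∀ k j : Fin 12, (grow γ k (σ (bot j)) +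
      728 * ∑ i : Fin 12, grow γ k (σ (top i)) * mA i j) % 729 = 0)
    (h2 : ∀ i n : Fin 12, (∑ k : Fin 12, u i k * grow γ k (σ (top n))) % 729 =
      if n = i then 1 else 0)
    (c : Fin 24 → ZMod 729) :
    (∃ y : Fin 12 → ZMod 729, ∀ n : Fin 24, c n = ∑ k : Fin 12, y k * (grow γ k n : ZMod 729)) ↔
      c ∘ σ ∈ Std := by
  have h728 : (728 : ZMod 729) = -1 := by decide +kernel
  have hmem : ∀ y : Fin 12 → ZMod 729,
      (fun n => ∑ k : Fin 12, y k * (grow γ k (σ n) : ZMod 729)) ∈ Std := fun y j => by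
    simp only [Finset.sum_mul]
    rw [Finset.sum_comm]
    refine Finset.sum_congr rfl fun k _ => ?_
    simp only [mul_assoc, ← Finset.mul_sum]
    refine congrArg (y k * ·) ?_
    have h0 : ((grow γ k (σ (bot j)) + 728 * ∑ i : Fin 12, grow γ k (σ (top i)) * mA i j : ℕ) :
        ZMod 729) = 0 := by
      rw [ZMod.natCast_eq_zero_iff]
      exact Nat.dvd_of_mod_eq_zero (h1 k j)
    push_cast at h0
    rw [h728] at h0
    linear_combination h0
  constructor
  · rintro ⟨y, hy⟩
    have : c ∘ σ = fun n => ∑ k : Fin 12, y k * (grow γ k (σ n) : ZMod 729) :=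
      funext fun n => hy (σ n)
    rw [this]
    exact hmem y
  · intro hc
    set y : Fin 12 → ZMod 729 := fun k => ∑ i : Fin 12, (c ∘ σ) (top i) * (u i k : ZMod 729) with hy
    have htop : ∀ n, (c ∘ σ) (top n) = ∑ k : Fin 12, y k * (grow γ k (σ (top n)) : ZMod 729) :=
      fun n => by
        simp only [hy, Finset.sum_mul]
        rw [Finset.sum_comm]
        have e : ∀ i : Fin 12, ∑ k : Fin 12, (u i k : ZMod 729) *
            (grow γ k (σ (top n)) : ZMod 729) = if n = i then 1 else 0 := fun i => by
          have h0 : ((∑ k : Fin 12, u i k * grow γ k (σ (top n)) : ℕ) : ZMod 729) =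
              ((if n = i then 1 else 0 : ℕ) : ZMod 729) := by
            rw [← h2 i n, ZMod.natCast_mod]
          push_cast at h0
          exact h0
        simp only [mul_assoc, ← Finset.mul_sum, e]
        simp
    refine ⟨y, fun n => ?_⟩
    obtain ⟨n, rfl⟩ := σ.surjective n
    rcases top_or_bot n with ⟨i, rfl⟩ | ⟨j, rfl⟩
    · exact htop i
    · have a := hc j
      have b := hmem y j
      simp only [← htop] at b
      exact a.trans b.symm

/-- The coefficients of the inverse power series of the first factor. -/
def invA (k : ℕ) : ℕ := [728, 94, 3, 637, 635, 634, 725, 92, 93, 95, 3, 636].getD k 0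

/-- The reversal of the cyclic coordinates, fixing `∞`. -/
def revP : Equiv.Perm (Fin 24) where
  toFun n := if h : n.1 < 23 then ⟨22 - n.1, by omega⟩ else n
  invFun n := if h : n.1 < 23 then ⟨22 - n.1, by omega⟩ else n
  left_inv := by decide
  right_inv := by decide

theorem goodCode_of_isLiftedQR (hall : checkAll = true) {g : Polynomial (ZMod 3)}
    (hg : IsQRFactor 3 g) {q : Polynomial (ZMod 729)}
    {C : Submodule (ZMod 729) (Fin 24 → ZMod 729)} {h3 : 3 ∣ 729}
    (hC : IsLiftedQR h3 g q C) : GoodCode C := by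
  obtain ⟨hq, hdeg, hdvd, hmod, hmem⟩ := hC
  rcases eq_gA_or_gB hg h3 hq hdeg hdvd hmod with rfl | rfl
  · refine (goodCode_Std hall).perm (Equiv.refl _) fun c => ?_
    rw [hmem, code_rows (γ := gA) rfl (K := (Polynomial.X - 1) * poly gB) (by
      rw [← factorization]; ring) (by decide +kernel)]
    exact rows_std _ (fun i k => if i ≤ k then invA (k - i) else 0) (by decide +kernel)
      (by decide +kernel) c
  · refine (goodCode_Std hall).perm revP fun c => ?_
    rw [hmem, code_rows (γ := gB) rfl (K := (Polynomial.X - 1) * poly gA) (by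
      rw [← factorization]; ring) (by decide +kernel)]
    exact rows_std _ (fun i k => if i ≤ 11 - k then 728 * invA (11 - k - i) else 0)
      (by decide +kernel) (by decide +kernel) c

end LiftedQR

/-- The partial weight enumerator `D_{3,3}` for the ternary lifted QR codes of length 24 vanishes. -/
theorem stmt_18 (g : Polynomial (ZMod 3)) (hg : IsQRFactor 3 g)
    (g6 : Polynomial (ZMod 729)) (C6 : Submodule (ZMod 729) (Fin 24 → ZMod 729))
    (hC6 : IsLiftedQR (by norm_num : (3:ℕ) ∣ 729) g g6 C6) :
    divPart (((3:ℚ) ^ 36)⁻¹ •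
        aeval (![X 0, X 1, X 2, X 6 - X 5, X 6 + 2 * X 5 - 3 * X 4,
        X 6 + 2 * X 5 + 6 * X 4 - 9 * X 3, X 6 + 2 * X 5 + 6 * X 4 + 18 * X 3] : Fin 7 → MvPolynomial (Fin 7) ℚ) (swe 3 6 C6))
      0 3 =
      0 := by
  exact LiftedQR.divPart_eq_zero_of_goodCode
    (LiftedQR.goodCode_of_isLiftedQR LiftedQR.checkAll_true hg hC6) _
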